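/- arXiv:math/0401205 — 2 statements merged into one kernel-verified Lean document; each statement's English description precedes it below -/
import Mathlib

section
/- Let c₊(z) = Σ_{k≥0} γ_k z^k with Σ_{k≥0}|γ_k| < ∞ and c₊(z) ≠ 0 for all |z| ≤ 1, and define ψ on T by ψ(e^{iθ}) = c₊(e^{−iθ}) c₊(e^{iθ})^{−1} χ(e^{iθ}). If A is a bounded linear operator on ℓ²(ℕ) with ⟨e_j, A e_k⟩ = δ_{jk} + ψ_{j+k+1} for all j,k ≥ 0 (i.e. A = I + H(ψ)), then A is invertible on ℓ²(ℕ). -/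
open Filter MeasureTheory
open scoped InnerProductSpace

noncomputable section

/-- ℓ²(ℕ) over ℂ. -/
abbrev l2 : Type := lp (fun _ : ℕ => ℂ) 2

/-- The `k`-th Fourier coefficient of a function on the unit circle, given as a
`2π`-periodic function of the angle: `a_k = (1/(2π)) ∫_0^{2π} f(θ) e^{-ikθ} dθ`. -/
def fc (f : ℝ → ℂ) (k : ℤ) : ℂ :=
  ((1 / (2 * Real.pi) : ℝ) : ℂ) *
    ∫ θ in (0:ℝ)..(2 * Real.pi), f θ * Complex.exp (-(Complex.I * k * θ))

/-- The standard orthonormal basis vector `e_j` of ℓ²(ℕ). -/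
def ee (j : ℕ) : l2 := lp.single 2 j 1

/-- Matrix entry `⟨e_j, A e_k⟩` of an operator on ℓ²(ℕ). -/
def ent (A : l2 →L[ℂ] l2) (j k : ℕ) : ℂ := ⟪ee j, A (ee k)⟫_ℂ

/-- The function `χ` on the circle: `χ(e^{iθ}) = i` for `0 < θ < π` and
`χ(e^{iθ}) = −i` for `−π < θ < 0`. -/
def chi (θ : ℝ) : ℂ := if 0 < Real.sin θ then Complex.I else -Complex.I

/-! Let `P` be the Riesz projection of `L²(T)` onto the Hardy space `H²` and let
`(J u)(t) = t⁻¹ u(t⁻¹)`, so that `I + H(ψ)` is the compression of `I + ψ J` to `H²`.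
For `ψ(t) = c(t⁻¹) c(t)⁻¹ χ(t)` this compression is `P c⁻¹ (I + χ J) c`. Multiplication by
`c(t) c(t⁻¹)` commutes with `I + χ J`, multiplication by `c` and `c⁻¹` preserves `H²`, and
multiplication by `c(t⁻¹)` and `c(t⁻¹)⁻¹` preserves `ker P`. Invertibility therefore reduces to
two facts about `χ` alone.

* `I + H(χ)` is invertible: the entries of `H(χ)` are, up to a positive factor, the moments
  `∫ s ^ (j + k) ds` over `[-1, 1]`, so `H(χ) ≥ 0`.
* There is no nonzero `u ∈ ker P` with `χ J u = u`: such a `u` satisfies `χ u = -J u ∈ H²`, so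
  `h = χ |u|²` has Fourier coefficients of positive index only, while `conj h = -h`; hence `h = 0`.
-/

open Complex (I)
open AddCircle (haarAddCircle)
open scoped BoundedContinuousFunction ComplexConjugate ENNReal NNReal Topology

theorem bijective_conj_compression {R H L : Type*} [Ring R] [AddCommGroup H] [Module R H]
    [AddCommGroup L] [Module R L] {ι : H →ₗ[R] L} {p : L →ₗ[R] H} {E : L →ₗ[R] L}
    {M W : L ≃ₗ[R] L} (hpι : Function.LeftInverse p ι)
    (hcomm : ∀ u, M (W (E u)) = E (M (W u)))
    (hM : ∀ x, M (ι x) ∈ LinearMap.range ι) (hM' : ∀ x, M.symm (ι x) ∈ LinearMap.range ι)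
    (hW : ∀ u, p u = 0 → p (W u) = 0) (hW' : ∀ u, p u = 0 → p (W.symm u) = 0)
    (hE : Function.Bijective fun x => p (E (ι x))) (hpE : ∀ u, p (E u) = 0 → E u = 0) :
    Function.Bijective fun x => p (M.symm (E (M (ι x)))) := by
  have hconj : ∀ u, M.symm (E (M u)) = W (E (W.symm u)) := fun u => by
    rw [M.symm_apply_eq, hcomm, W.apply_symm_apply]
  constructor
  · refine (injective_iff_map_eq_zero (p ∘ₗ M.symm.toLinearMap ∘ₗ E ∘ₗ M.toLinearMap ∘ₗ ι)).2
      fun x (hx : p (M.symm (E (M (ι x)))) = 0) => ?_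
    have hW0 : E (W.symm (ι x)) = 0 := hpE _ (by simpa [hconj] using hW' _ hx)
    have hM0 : E (M (ι x)) = 0 := by simpa [hW0] using hconj (ι x)
    obtain ⟨y, hy⟩ := hM x
    have hy0 : y = 0 := hE.1 (by simp [hy, hM0])
    exact hpι.injective (by simpa [hy0] using hy.symm)
  · intro z
    obtain ⟨s, hs : p (E (ι s)) = p (W.symm (ι z))⟩ := hE.2 (p (W.symm (ι z)))
    have hz : p (W (E (ι s))) = z := by
      have h := hW (E (ι s) - W.symm (ι z)) (by rw [map_sub, hs, sub_self])
      rwa [map_sub, map_sub, W.apply_symm_apply, hpι, sub_eq_zero] at h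
    obtain ⟨y, hy : p (E (ι y)) = p (E (M (W (ι s))))⟩ := hE.2 (p (E (M (W (ι s)))))
    have hEy : E (ι y) = E (M (W (ι s))) := by
      rw [← sub_eq_zero, ← map_sub]
      exact hpE _ (by rw [map_sub, map_sub, hy, sub_self])
    obtain ⟨x, hx⟩ := hM' y
    refine ⟨x, ?_⟩
    simp only [hx, M.apply_symm_apply, hEy]
    rw [← hcomm, M.symm_apply_apply, hz]

section Multiplication

variable {α : Type*} [MeasurableSpace α] {μ : Measure α} {𝕜 : Type*} [NontriviallyNormedField 𝕜]
  {p : ℝ≥0∞} [Fact (1 ≤ p)] {f g h : α → 𝕜}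

/-- Multiplication by an essentially bounded function, as an operator on `Lᵖ`. -/
def mulOp (hf : MemLp f ∞ μ) : Lp 𝕜 p μ →L[𝕜] Lp 𝕜 p μ :=
  (ContinuousLinearMap.mul 𝕜 𝕜).holderL μ ∞ p p (hf.toLp f)

theorem coeFn_mulOp (hf : MemLp f ∞ μ) (u : Lp 𝕜 p μ) :
    mulOp hf u =ᵐ[μ] fun x => f x * u x := by
  filter_upwards [(ContinuousLinearMap.mul 𝕜 𝕜).coeFn_holder (r := p) (hf.toLp f) u,
    hf.coeFn_toLp] with x hx hfx
  rw [← hfx]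
  exact hx

theorem mulOp_mulOp (hf : MemLp f ∞ μ) (hg : MemLp g ∞ μ) (hh : MemLp h ∞ μ)
    (hfg : ∀ᵐ x ∂μ, f x * g x = h x) (u : Lp 𝕜 p μ) : mulOp hf (mulOp hg u) = mulOp hh u := by
  refine Lp.ext ?_
  filter_upwards [coeFn_mulOp hf (mulOp hg u), coeFn_mulOp hg u, coeFn_mulOp hh u, hfg]
    with x hx hgx hhx hfgx
  rw [hx, hgx, hhx, ← hfgx, mul_assoc]

theorem mulOp_comm (hf : MemLp f ∞ μ) (hg : MemLp g ∞ μ) (u : Lp 𝕜 p μ) :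
    mulOp hf (mulOp hg u) = mulOp hg (mulOp hf u) := by
  rw [mulOp_mulOp hf hg (hg.mul hf) (.of_forall fun _ => rfl),
    mulOp_mulOp hg hf (hg.mul hf) (.of_forall fun _ => mul_comm _ _)]

theorem mulOp_mulOp_of_mul_eq_one (hf : MemLp f ∞ μ) (hg : MemLp g ∞ μ)
    (hfg : ∀ᵐ x ∂μ, f x * g x = 1) (u : Lp 𝕜 p μ) : mulOp hf (mulOp hg u) = u := by
  refine Lp.ext ?_
  filter_upwards [coeFn_mulOp hf (mulOp hg u), coeFn_mulOp hg u, hfg] with x hx hgx hfgx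
  rw [hx, hgx, ← mul_assoc, hfgx, one_mul]

/-- Multiplication by an invertible element `f` of `L∞`, with inverse the multiplication by `g`. -/
def mulEquiv (hf : MemLp f ∞ μ) (hg : MemLp g ∞ μ) (hfg : ∀ᵐ x ∂μ, f x * g x = 1) :
    Lp 𝕜 p μ ≃ₗ[𝕜] Lp 𝕜 p μ :=
  { (mulOp hf).toLinearMap with
    invFun := mulOp hg
    left_inv := mulOp_mulOp_of_mul_eq_one hg hf (hfg.mono fun _ hx => by rwa [mul_comm])
    right_inv := mulOp_mulOp_of_mul_eq_one hf hg hfg }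

end Multiplication

theorem ae_eq_zero_of_forall_integral_boundedContinuous_smul_eq_zero {X E : Type*}
    [TopologicalSpace X] [HasOuterApproxClosed X] [MeasurableSpace X] [BorelSpace X]
    [NormedAddCommGroup E] [NormedSpace ℝ E] [CompleteSpace E] {μ : Measure X} {f : X → E}
    (hf : Integrable f μ)
    (h : ∀ φ : X →ᵇ ℝ≥0, ∫ x, (φ x : ℝ) • f x ∂μ = 0) : f =ᵐ[μ] 0 := by
  refine ae_eq_zero_of_forall_setIntegral_isClosed_eq_zero hf fun s hs => ?_
  have hlim : Tendsto (fun n => ∫ x, (hs.apprSeq n x : ℝ) • f x ∂μ) atTop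
      (𝓝 (∫ x, s.indicator f x ∂μ)) := by
    refine tendsto_integral_of_dominated_convergence (fun x => ‖f x‖)
      (fun n => ((NNReal.continuous_coe.comp
        (hs.apprSeq n).continuous).measurable.aestronglyMeasurable.smul hf.aestronglyMeasurable))
      hf.norm (fun n => .of_forall fun x => ?_) (.of_forall fun x => ?_)
    · rw [norm_smul, NNReal.norm_eq]
      exact mul_le_of_le_one_left (norm_nonneg _)
        (HasOuterApproxClosed.apprSeq_apply_le_one hs n x)
    · have hx := (NNReal.tendsto_coe.2
        (tendsto_pi_nhds.1 (HasOuterApproxClosed.tendsto_apprSeq hs) x)).smul_const (f x)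
      by_cases hxs : x ∈ s <;> simpa [hxs] using hx
  simp_rw [h] at hlim
  rw [← integral_indicator hs.measurableSet]
  exact tendsto_nhds_unique hlim tendsto_const_nhds

theorem memLp_top_of_continuous {X E : Type*} [TopologicalSpace X] [CompactSpace X]
    [MeasurableSpace X] [OpensMeasurableSpace X] [NormedAddCommGroup E]
    [SecondCountableTopologyEither X E] {μ : Measure X} [IsFiniteMeasure μ] {f : X → E}
    (hf : Continuous f) : MemLp f ∞ μ :=
  hf.memLp_top_of_hasCompactSupport (.of_compactSpace f) μ

section FourierCoeff

variable {T : ℝ} [Fact (0 < T)]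

/-- The Hilbert space `L²` of the circle, with normalised Haar measure. -/
abbrev L2Circle (T : ℝ) [Fact (0 < T)] : Type := Lp ℂ 2 (haarAddCircle (T := T))

theorem fourierCoeff_comp_neg {E : Type*} [NormedAddCommGroup E] [NormedSpace ℂ E]
    (f : AddCircle T → E) (n : ℤ) : fourierCoeff (fun x => f (-x)) n = fourierCoeff f (-n) := by
  rw [fourierCoeff, ← integral_neg_eq_self]
  simp [fourierCoeff]

theorem fourierCoeff_fourier_smul {E : Type*} [NormedAddCommGroup E] [NormedSpace ℂ E]
    (f : AddCircle T → E) (m n : ℤ) :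
    fourierCoeff (fun x => fourier m x • f x) n = fourierCoeff f (n - m) := by
  refine integral_congr_ae (.of_forall fun x => ?_)
  dsimp only
  rw [smul_smul, ← fourier_add, neg_sub, neg_add_eq_sub]

theorem fourierCoeff_conj (f : AddCircle T → ℂ) (n : ℤ) :
    fourierCoeff (fun x => conj (f x)) n = conj (fourierCoeff f (-n)) := by
  rw [fourierCoeff, fourierCoeff, ← integral_conj]
  simp

theorem inner_fourierLp_toLp {f : AddCircle T → ℂ} (hf : MemLp f 2 haarAddCircle) (n : ℤ) :
    ⟪(fourierLp 2 n : L2Circle T), hf.toLp⟫_ℂ = fourierCoeff f n := by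
  rw [← coe_fourierBasis, ← fourierBasis.repr_apply_apply, fourierBasis_repr,
    fourierCoeff_congr_ae hf.coeFn_toLp]

theorem hasSum_fourierCoeff_mul {f g : AddCircle T → ℂ} (hf : MemLp f 2 haarAddCircle)
    (hg : MemLp g 2 haarAddCircle) (n : ℤ) :
    HasSum (fun i => fourierCoeff f (n - i) * fourierCoeff g i)
      (fourierCoeff (fun x => f x * g x) n) := by
  have he : MemLp (fourier (-n) : AddCircle T → ℂ) ∞ haarAddCircle :=
    memLp_top_of_continuous (fourier (-n)).continuous
  have hu : MemLp (fun x => conj (fourier (-n) x • f x)) 2 haarAddCircle := (hf.mul he).star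
  have hcoeff : ∀ i, ⟪hu.toLp, (fourierLp 2 i : L2Circle T)⟫_ℂ = fourierCoeff f (n - i) :=
    fun i => by
      rw [← inner_conj_symm, inner_fourierLp_toLp, fourierCoeff_conj, Complex.conj_conj,
        fourierCoeff_fourier_smul, neg_sub_neg]
  have hinner : ⟪hu.toLp, hg.toLp⟫_ℂ = fourierCoeff (fun x => f x * g x) n := by
    rw [L2.inner_def]
    refine integral_congr_ae ?_
    filter_upwards [hu.coeFn_toLp, hg.coeFn_toLp] with x hux hgx
    rw [hux, hgx, RCLike.inner_apply, Complex.conj_conj, smul_eq_mul, smul_eq_mul]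
    ring
  simpa only [coe_fourierBasis, hcoeff, hinner, inner_fourierLp_toLp] using
    (fourierBasis (T := T)).hasSum_inner_mul_inner hu.toLp hg.toLp

theorem fourierCoeff_mul_eq_zero {f g : AddCircle T → ℂ} (hf : MemLp f 2 haarAddCircle)
    (hg : MemLp g 2 haarAddCircle) {a b n : ℤ} (hfa : ∀ i < a, fourierCoeff f i = 0)
    (hgb : ∀ i < b, fourierCoeff g i = 0) (hn : n < a + b) :
    fourierCoeff (fun x => f x * g x) n = 0 := by
  refine (hasSum_fourierCoeff_mul hf hg n).unique ?_
  convert hasSum_zero with i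
  rcases lt_or_ge i b with hi | hi
  · rw [hgb i hi, mul_zero]
  · rw [hfa (n - i) (by omega), zero_mul]

theorem ae_eq_zero_of_fourierCoeff_eq_zero {E : Type*} [NormedAddCommGroup E] [NormedSpace ℂ E]
    [CompleteSpace E] {f : AddCircle T → E} (hf : Integrable f haarAddCircle)
    (h : ∀ n, fourierCoeff f n = 0) : f =ᵐ[haarAddCircle] 0 := by
  have hint : ∀ φ : C(AddCircle T, ℂ), Integrable (fun x => φ x • f x) haarAddCircle := fun φ =>
    hf.bdd_smul ‖φ‖ φ.continuous.aestronglyMeasurable (.of_forall φ.norm_coe_le_norm)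
  let Λ : C(AddCircle T, ℂ) →ₗ[ℂ] E :=
    { toFun := fun φ => ∫ x, φ x • f x ∂haarAddCircle
      map_add' := fun φ η => by
        rw [← integral_add (hint φ) (hint η)]
        simp only [ContinuousMap.add_apply, add_smul]
      map_smul' := fun a φ => by
        simp only [ContinuousMap.smul_apply, smul_assoc, integral_smul, RingHom.id_apply] }
  have hbound : ∀ φ, ‖Λ φ‖ ≤ (∫ x, ‖f x‖ ∂haarAddCircle) * ‖φ‖ := fun φ => by
    rw [← integral_mul_const]
    refine norm_integral_le_of_norm_le (hf.norm.mul_const _) (.of_forall fun x => ?_)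
    rw [norm_smul, mul_comm]
    gcongr
    exact φ.norm_coe_le_norm x
  have hΛ : Λ.mkContinuous _ hbound = 0 :=
    ContinuousLinearMap.ext_on
      (Submodule.dense_iff_topologicalClosure_eq_top.2 span_fourier_closure_eq_top)
      (Set.forall_mem_range.2 fun n => by
        have hn := h (-n)
        rwa [fourierCoeff, neg_neg] at hn)
  refine ae_eq_zero_of_forall_integral_boundedContinuous_smul_eq_zero hf fun φ => ?_
  exact DFunLike.congr_fun hΛ ⟨fun x => ((φ x : ℝ) : ℂ), by fun_prop⟩

end FourierCoeff

section Hardy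

variable {T : ℝ} [Fact (0 < T)]

theorem ext_fourierCoeff {u v : L2Circle T} (h : ∀ n, fourierCoeff u n = fourierCoeff v n) :
    u = v := by
  refine fourierBasis.repr.injective (lp.ext (funext fun n => ?_))
  rw [fourierBasis_repr, fourierBasis_repr, h]

/-- The flip `(Ju)(t) = t⁻¹ u(t⁻¹)` on `L²` of the circle, which exchanges the Hardy space with
its orthogonal complement. -/
def flipOp : L2Circle T →L[ℂ] L2Circle T :=
  mulOp (memLp_top_of_continuous (fourier (-1)).continuous) ∘L
    (Lp.compMeasurePreservingₗᵢ ℂ Neg.neg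
      (Measure.measurePreserving_neg haarAddCircle)).toContinuousLinearMap

theorem ae_comp_neg {P : AddCircle T → Prop} (h : ∀ᵐ x ∂haarAddCircle, P x) :
    ∀ᵐ x ∂haarAddCircle, P (-x) :=
  (Measure.measurePreserving_neg haarAddCircle).quasiMeasurePreserving.ae h

theorem coeFn_flipOp (u : L2Circle T) :
    flipOp u =ᵐ[haarAddCircle] fun x => fourier (-1) x * u (-x) := by
  have hneg := Measure.measurePreserving_neg (haarAddCircle (T := T))
  filter_upwards [coeFn_mulOp (memLp_top_of_continuous (fourier (-1)).continuous)
    (Lp.compMeasurePreserving Neg.neg hneg u), Lp.coeFn_compMeasurePreserving u hneg] with x hx hux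
  rw [← Function.comp_apply (f := u), ← hux]
  exact hx

theorem memLp_comp_neg {E : Type*} [NormedAddCommGroup E] {p : ℝ≥0∞} {f : AddCircle T → E}
    (hf : MemLp f p haarAddCircle) : MemLp (fun x => f (-x)) p haarAddCircle :=
  hf.comp_measurePreserving (Measure.measurePreserving_neg haarAddCircle)

theorem flipOp_mulOp {f : AddCircle T → ℂ} (hf : MemLp f ∞ haarAddCircle) (u : L2Circle T) :
    flipOp (mulOp hf u) = mulOp (memLp_comp_neg hf) (flipOp u) := by
  refine Lp.ext ?_
  filter_upwards [coeFn_flipOp (mulOp hf u), ae_comp_neg (coeFn_mulOp hf u), coeFn_flipOp u,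
    coeFn_mulOp (memLp_comp_neg hf) (flipOp u)] with x hx hfx hux hx'
  rw [hx, hfx, hx', hux, mul_left_comm]

theorem flipOp_flipOp (u : L2Circle T) : flipOp (flipOp u) = u := by
  refine Lp.ext ?_
  filter_upwards [coeFn_flipOp (flipOp u), ae_comp_neg (coeFn_flipOp u)] with x hx hux
  have hone : fourier (-1) x * fourier (-1) (-x) = (1 : ℂ) := by
    simp [fourier_apply, AddCircle.toCircle_neg]
  rw [hx, hux, neg_neg, ← mul_assoc, hone, one_mul]

theorem flipOp_mulOp_comp_neg {f : AddCircle T → ℂ} (hf : MemLp f ∞ haarAddCircle)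
    (u : L2Circle T) : flipOp (mulOp (memLp_comp_neg hf) u) = mulOp hf (flipOp u) := by
  rw [← flipOp_flipOp (mulOp hf (flipOp u)), flipOp_mulOp, flipOp_flipOp]
  simp only [neg_neg]

theorem fourierCoeff_flipOp (u : L2Circle T) (n : ℤ) :
    fourierCoeff (flipOp u) n = fourierCoeff u (-1 - n) := by
  rw [fourierCoeff_congr_ae (coeFn_flipOp u)]
  refine (fourierCoeff_fourier_smul (fun x => u (-x)) (-1) n).trans ?_
  rw [fourierCoeff_comp_neg, neg_sub]

theorem inner_ee (j : ℕ) (x : l2) : ⟪ee j, x⟫_ℂ = x j := by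
  rw [ee, lp.inner_single_left]
  simp

theorem hasSum_ee (x : l2) : HasSum (fun k => x k • ee k) x := by
  convert lp.hasSum_single (E := fun _ : ℕ => ℂ) (p := 2) (by simp) x using 2 with k
  rw [ee, ← lp.single_smul, smul_eq_mul, mul_one]

/-- The isometric embedding of `ℓ²(ℕ)` into `L²` of the circle which sends `x` to the function
with Fourier series `∑ x n * t ^ n`; its range is the Hardy space `H²`. -/
def hardyIncl : l2 →ₗᵢ[ℂ] L2Circle T :=
  (orthonormal_fourier.comp ((↑) : ℕ → ℤ) Nat.cast_injective).orthogonalFamily.linearIsometry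

/-- The Riesz projection, from `L²` of the circle to `ℓ²(ℕ)`: it sends a function to the sequence
of its Fourier coefficients of nonnegative index. -/
def hardyProj : L2Circle T →L[ℂ] l2 :=
  ContinuousLinearMap.adjoint hardyIncl.toContinuousLinearMap

theorem hardyIncl_ee (n : ℕ) : (hardyIncl (ee n) : L2Circle T) = fourierLp 2 (n : ℤ) := by
  rw [hardyIncl, ee, OrthogonalFamily.linearIsometry_apply_single]
  simp

theorem hardyProj_apply (u : L2Circle T) (n : ℕ) : hardyProj u n = fourierCoeff u n := by
  rw [← inner_ee, hardyProj, ContinuousLinearMap.adjoint_inner_right,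
    LinearIsometry.coe_toContinuousLinearMap, hardyIncl_ee, ← fourierBasis_repr,
    fourierBasis.repr_apply_apply, coe_fourierBasis]

theorem hardyProj_hardyIncl (x : l2) : hardyProj (hardyIncl x : L2Circle T) = x :=
  ext_inner_left ℂ fun y => by
    rw [hardyProj, ContinuousLinearMap.adjoint_inner_right]
    exact hardyIncl.inner_map_map y x

theorem hardyProj_eq_zero_iff {u : L2Circle T} :
    hardyProj u = 0 ↔ ∀ n, 0 ≤ n → fourierCoeff u n = 0 := by
  refine ⟨fun h n hn => ?_, fun h => lp.ext (funext fun n => ?_)⟩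
  · lift n to ℕ using hn
    rw [← hardyProj_apply, h]
    rfl
  · rw [hardyProj_apply, h _ (Int.natCast_nonneg n)]
    rfl

theorem fourierCoeff_hardyIncl_of_neg (x : l2) {n : ℤ} (hn : n < 0) :
    fourierCoeff (hardyIncl x : L2Circle T) n = 0 := by
  have h : hardyProj (fourierLp 2 n : L2Circle T) = 0 :=
    lp.ext (funext fun k => by
      rw [hardyProj_apply, fourierCoeff_toLp, fourierCoeff_fourier]
      exact Pi.single_eq_of_ne (by omega) _)
  rw [← fourierBasis_repr, fourierBasis.repr_apply_apply, coe_fourierBasis]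
  exact (ContinuousLinearMap.adjoint_inner_left hardyIncl.toContinuousLinearMap _ _).symm.trans
    (by rw [← hardyProj, h, inner_zero_left])

theorem mem_range_hardyIncl_iff {u : L2Circle T} :
    u ∈ LinearMap.range hardyIncl.toLinearMap ↔ ∀ n < 0, fourierCoeff u n = 0 := by
  refine ⟨?_, fun h => ⟨hardyProj u, ext_fourierCoeff fun n => ?_⟩⟩
  · rintro ⟨x, rfl⟩ n hn
    exact fourierCoeff_hardyIncl_of_neg x hn
  · rcases lt_or_ge n 0 with hn | hn
    · rw [h n hn]
      exact fourierCoeff_hardyIncl_of_neg _ hn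
    · lift n to ℕ using hn
      rw [← hardyProj_apply, ← hardyProj_apply]
      exact congrArg (fun x : l2 => x n) (hardyProj_hardyIncl _)

theorem flipOp_mem_range_hardyIncl_iff {u : L2Circle T} :
    flipOp u ∈ LinearMap.range hardyIncl.toLinearMap ↔ hardyProj u = 0 := by
  simp only [mem_range_hardyIncl_iff, hardyProj_eq_zero_iff, fourierCoeff_flipOp]
  exact ⟨fun h n hn => by simpa using h (-1 - n) (by omega), fun h n hn => h _ (by omega)⟩

end Hardy

section HardyAlgebra

variable {T : ℝ} [Fact (0 < T)] {f : AddCircle T → ℂ}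

/-- Membership in the Hardy algebra `H∞` of the circle: the essentially bounded functions whose
Fourier coefficients of negative index vanish. -/
structure MemHInfty (f : AddCircle T → ℂ) : Prop where
  memLp_top : MemLp f ∞ haarAddCircle
  fourierCoeff_eq_zero : ∀ n < 0, fourierCoeff f n = 0

theorem MemHInfty.mulOp_mem_range_hardyIncl (hf : MemHInfty f) {u : L2Circle T}
    (hu : u ∈ LinearMap.range hardyIncl.toLinearMap) :
    mulOp hf.memLp_top u ∈ LinearMap.range hardyIncl.toLinearMap := by
  rw [mem_range_hardyIncl_iff] at hu ⊢
  intro n hn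
  rw [fourierCoeff_congr_ae (coeFn_mulOp hf.memLp_top u)]
  exact fourierCoeff_mul_eq_zero (hf.memLp_top.mono_exponent le_top) (Lp.memLp u)
    hf.fourierCoeff_eq_zero hu (by simpa using hn)

theorem MemHInfty.hardyProj_mulOp_comp_neg (hf : MemHInfty f) {u : L2Circle T}
    (hu : hardyProj u = 0) : hardyProj (mulOp (memLp_comp_neg hf.memLp_top) u) = 0 := by
  rw [← flipOp_mem_range_hardyIncl_iff] at hu
  rw [← flipOp_flipOp u, ← flipOp_mulOp, ← flipOp_mem_range_hardyIncl_iff, flipOp_flipOp]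
  exact hf.mulOp_mem_range_hardyIncl hu

end HardyAlgebra

section Hankel

variable {T : ℝ} [Fact (0 < T)] {c d σ ψ : AddCircle T → ℂ}

/-- The Hankel operator with essentially bounded symbol `ψ`, as the compression to `H²` of the flip
followed by the multiplication by `ψ`. -/
def hankelOp (hψ : MemLp ψ ∞ haarAddCircle) : l2 →L[ℂ] l2 :=
  hardyProj ∘L mulOp hψ ∘L flipOp ∘L hardyIncl.toContinuousLinearMap

theorem hankelOp_apply (hψ : MemLp ψ ∞ haarAddCircle) (x : l2) :
    hankelOp hψ x = hardyProj (mulOp hψ (flipOp (hardyIncl x))) := rfl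

theorem ent_hankelOp (hψ : MemLp ψ ∞ haarAddCircle) (j k : ℕ) :
    ent (hankelOp hψ) j k = fourierCoeff ψ ((j : ℤ) + k + 1) := by
  rw [ent, inner_ee, hankelOp_apply, hardyProj_apply, hardyIncl_ee]
  set e : L2Circle T := fourierLp 2 (k : ℤ)
  have hmul : mulOp hψ (flipOp e) =ᵐ[haarAddCircle] fun x => fourier (-1 - (k : ℤ)) x • ψ x := by
    filter_upwards [coeFn_mulOp hψ (flipOp e), coeFn_flipOp e,
      ae_comp_neg (coeFn_fourierLp 2 (k : ℤ))] with x hx hflip he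
    rw [hx, hflip, he, sub_eq_add_neg, fourier_add, fourier_apply (n := -(k : ℤ)), neg_smul,
      ← smul_neg, ← fourier_apply, smul_eq_mul, mul_comm]
  rw [fourierCoeff_congr_ae hmul, fourierCoeff_fourier_smul]
  congr 1
  ring

theorem ent_one_add_hankelOp (hψ : MemLp ψ ∞ haarAddCircle) (j k : ℕ) :
    ent (1 + hankelOp hψ) j k = (if j = k then 1 else 0) + fourierCoeff ψ ((j : ℤ) + k + 1) := by
  rw [← ent_hankelOp hψ, ent, add_apply, one_apply_eq_self, inner_add_right, ← ent,
    inner_ee, ee, lp.single_apply, Pi.single_apply]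

theorem ext_ent {A B : l2 →L[ℂ] l2} (h : ∀ j k, ent A j k = ent B j k) : A = B := by
  have hee : ∀ k, A (ee k) = B (ee k) := fun k =>
    lp.ext (funext fun j => by simpa only [ent, inner_ee] using h j k)
  ext1 x
  have hA := (hasSum_ee x).mapL A
  simp only [map_smul, hee] at hA
  exact hA.unique (by simpa only [map_smul] using (hasSum_ee x).mapL B)

theorem one_add_hankelOp_apply_of_factorization (hc : MemLp c ∞ haarAddCircle)
    (hd : MemLp d ∞ haarAddCircle) (hcd : ∀ᵐ x ∂haarAddCircle, c x * d x = 1)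
    (hσ : MemLp σ ∞ haarAddCircle) (hψ : MemLp ψ ∞ haarAddCircle)
    (hψc : ∀ᵐ x ∂haarAddCircle, ψ x = c (-x) * d x * σ x) (x : l2) :
    (1 + hankelOp hψ) x = hardyProj (mulOp hd (mulOp hc (hardyIncl x) +
      mulOp hσ (flipOp (mulOp hc (hardyIncl x))))) := by
  have hmul : mulOp hψ (flipOp (hardyIncl x)) =
      mulOp hd (mulOp hσ (flipOp (mulOp hc (hardyIncl x)))) := by
    rw [flipOp_mulOp, mulOp_mulOp hσ (memLp_comp_neg hc) ((memLp_comp_neg hc).mul hσ)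
      (.of_forall fun _ => rfl), mulOp_mulOp hd _ hψ]
    filter_upwards [hψc] with x hx
    rw [hx, Pi.mul_apply]
    ring
  rw [map_add, mulOp_mulOp_of_mul_eq_one hd hc (hcd.mono fun _ h => by rwa [mul_comm]), ← hmul,
    map_add, hardyProj_hardyIncl]
  rfl

theorem isUnit_one_add_hankelOp_of_factorization (hc : MemHInfty c) (hd : MemHInfty d)
    (hcd : ∀ᵐ x ∂haarAddCircle, c x * d x = 1) (hσ : MemLp σ ∞ haarAddCircle)
    (hσσ : ∀ᵐ x ∂haarAddCircle, σ x * σ (-x) = 1) (hψ : MemLp ψ ∞ haarAddCircle)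
    (hψc : ∀ᵐ x ∂haarAddCircle, ψ x = c (-x) * d x * σ x) (hunit : IsUnit (1 + hankelOp hσ))
    (hfix : ∀ u : L2Circle T, mulOp hσ (flipOp u) = u → hardyProj u = 0 → u = 0) :
    IsUnit (1 + hankelOp hψ) := by
  let E : L2Circle T →ₗ[ℂ] L2Circle T :=
    LinearMap.id + (mulOp hσ).toLinearMap ∘ₗ flipOp.toLinearMap
  have hE : ∀ u, E u = u + mulOp hσ (flipOp u) := fun _ => rfl
  let M : L2Circle T ≃ₗ[ℂ] L2Circle T := mulEquiv hc.memLp_top hd.memLp_top hcd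
  have hcd' := ae_comp_neg hcd
  let W : L2Circle T ≃ₗ[ℂ] L2Circle T := mulEquiv (memLp_comp_neg hc.memLp_top)
    (memLp_comp_neg hd.memLp_top) hcd'
  have hcomm : ∀ u, M (W (E u)) = E (M (W u)) := fun u => by
    change mulOp hc.memLp_top (mulOp (memLp_comp_neg hc.memLp_top) (E u)) =
      E (mulOp hc.memLp_top (mulOp (memLp_comp_neg hc.memLp_top) u))
    rw [hE, hE, flipOp_mulOp, flipOp_mulOp_comp_neg, map_add, map_add, mulOp_comm hσ,
      mulOp_comm hσ, mulOp_comm hc.memLp_top _ (mulOp hσ _)]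
  have hpE : ∀ u, hardyProj (E u) = 0 → E u = 0 := fun u =>
    hfix _ (by
      rw [hE, map_add, flipOp_mulOp, map_add, mulOp_mulOp_of_mul_eq_one hσ _ hσσ, flipOp_flipOp,
        add_comm])
  have hEσ : Function.Bijective fun x => hardyProj (E (hardyIncl x)) := by
    convert! (ContinuousLinearMap.isUnit_iff_bijective.1 hunit) using 2 with x
    rw [hE, map_add, hardyProj_hardyIncl]
    rfl
  have hfactor : ⇑(1 + hankelOp hψ) = fun x => hardyProj (M.symm (E (M (hardyIncl x)))) :=
    funext fun x =>
      one_add_hankelOp_apply_of_factorization hc.memLp_top hd.memLp_top hcd hσ hψ hψc x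
  rw [ContinuousLinearMap.isUnit_iff_bijective, hfactor]
  exact bijective_conj_compression (ι := hardyIncl.toLinearMap) (p := hardyProj.toLinearMap)
    hardyProj_hardyIncl hcomm
    (fun x => hc.mulOp_mem_range_hardyIncl ⟨x, rfl⟩)
    (fun x => hd.mulOp_mem_range_hardyIncl ⟨x, rfl⟩)
    (fun u hu => hc.hardyProj_mulOp_comp_neg hu)
    (fun u hu => hd.hardyProj_mulOp_comp_neg hu) hEσ hpE

end Hankel

section FixedPoints

variable {T : ℝ} [Fact (0 < T)] {σ : AddCircle T → ℂ}

theorem mulOp_eq_neg_flipOp (hσ : MemLp σ ∞ haarAddCircle)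
    (hσσ : ∀ᵐ x ∂haarAddCircle, σ x * σ x = -1) {u : L2Circle T}
    (hu : mulOp hσ (flipOp u) = u) : mulOp hσ u = -flipOp u := by
  have hu_ae := coeFn_mulOp hσ (flipOp u)
  rw [hu] at hu_ae
  refine Lp.ext ?_
  filter_upwards [hu_ae, coeFn_mulOp hσ u, Lp.coeFn_neg (flipOp u), hσσ] with x hx hmul hneg hσx
  rw [hmul, hx, hneg, Pi.neg_apply]
  linear_combination flipOp u x * hσx

theorem ae_eq_zero_of_fourierCoeff_eq_zero_of_conj_eq_neg {h : AddCircle T → ℂ}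
    (hint : Integrable h haarAddCircle) (h0 : ∀ n ≤ 0, fourierCoeff h n = 0)
    (hconj : ∀ᵐ x ∂haarAddCircle, conj (h x) = -h x) : h =ᵐ[haarAddCircle] 0 := by
  refine ae_eq_zero_of_fourierCoeff_eq_zero hint fun n => ?_
  rcases le_or_gt n 0 with hn | hn
  · exact h0 n hn
  · have hneg : fourierCoeff (fun x => conj (h x)) n = -fourierCoeff h n := by
      rw [fourierCoeff_congr_ae hconj, fourierCoeff, fourierCoeff, ← integral_neg]
      simp only [smul_neg]
    rw [← neg_eq_zero, ← hneg, fourierCoeff_conj, h0 (-n) (by omega), map_zero]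

theorem eq_zero_of_mulOp_flipOp_eq_self (hσ : MemLp σ ∞ haarAddCircle)
    (hσσ : ∀ᵐ x ∂haarAddCircle, σ x * σ x = -1) {u : L2Circle T} (hu : mulOp hσ (flipOp u) = u)
    (hu0 : hardyProj u = 0) : u = 0 := by
  have hσu_coeff : ∀ n < 0, fourierCoeff (mulOp hσ u) n = 0 := by
    rw [← mem_range_hardyIncl_iff, mulOp_eq_neg_flipOp hσ hσσ hu]
    exact neg_mem (flipOp_mem_range_hardyIncl_iff.2 hu0)
  have hconj_coeff : ∀ n < 1, fourierCoeff (fun x => conj (u x)) n = 0 := fun n hn => by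
    rw [fourierCoeff_conj, hardyProj_eq_zero_iff.1 hu0 _ (by omega), map_zero]
  have hconj_mem : MemLp (fun x => conj (u x)) 2 haarAddCircle := (Lp.memLp u).star
  have hprod : (fun x => mulOp hσ u x * conj (u x)) =ᵐ[haarAddCircle] 0 := by
    refine ae_eq_zero_of_fourierCoeff_eq_zero_of_conj_eq_neg
      ((Lp.memLp (mulOp hσ u)).integrable_mul hconj_mem)
      (fun n hn => fourierCoeff_mul_eq_zero (Lp.memLp _) hconj_mem hσu_coeff hconj_coeff
        (by omega)) ?_
    filter_upwards [coeFn_mulOp hσ u, hσσ] with x hx hσx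
    have hconjσ : conj (σ x) = -σ x := by
      rcases mul_self_eq_mul_self_iff.1 (hσx.trans Complex.I_mul_I.symm) with h | h <;> simp [h]
    rw [hx, map_mul, map_mul, Complex.conj_conj, hconjσ]
    ring
  rw [Lp.eq_zero_iff_ae_eq_zero]
  filter_upwards [hprod, coeFn_mulOp hσ u, hσσ] with x hx hmul hσx
  have hσ0 : σ x ≠ 0 := left_ne_zero_of_mul (hσx ▸ neg_ne_zero.2 one_ne_zero)
  simpa [hmul, hσ0] using hx

end FixedPoints

section MomentMatrices

variable {ν : Measure ℝ} {A : l2 →L[ℂ] l2}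

theorem inner_sum_smul_ee_eq_integral_norm_sq (hν : ∀ n : ℕ, Integrable (fun s => s ^ n) ν)
    (hA : ∀ j k, ent A j k = ∫ s, (s : ℂ) ^ (j + k) ∂ν) (t : Finset ℕ) (a : ℕ → ℂ) :
    ⟪A (∑ k ∈ t, a k • ee k), ∑ k ∈ t, a k • ee k⟫_ℂ =
      ((∫ s : ℝ, ‖∑ k ∈ t, a k * (s : ℂ) ^ k‖ ^ 2 ∂ν : ℝ) : ℂ) := by
  have hint : ∀ (c : ℂ) (n : ℕ), Integrable (fun s : ℝ => c * (s : ℂ) ^ n) ν := fun c n => by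
    simpa only [RCLike.ofReal_pow] using! (hν n).ofReal.const_mul c
  have hexpand : ∀ s : ℝ, ((‖∑ k ∈ t, a k * (s : ℂ) ^ k‖ ^ 2 : ℝ) : ℂ) =
      ∑ j ∈ t, ∑ k ∈ t, a j * conj (a k) * (s : ℂ) ^ (j + k) := fun s => by
    rw [Complex.ofReal_pow, ← Complex.mul_conj', map_sum, Finset.sum_mul_sum]
    refine Finset.sum_congr rfl fun j _ => Finset.sum_congr rfl fun k _ => ?_
    rw [map_mul, map_pow, Complex.conj_ofReal]
    ring
  have hent : ∀ j k, ⟪A (ee k), ee j⟫_ℂ = ∫ s, (s : ℂ) ^ (j + k) ∂ν := fun j k => by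
    rw [← inner_conj_symm, ← ent, hA, ← integral_conj]
    simp only [map_pow, Complex.conj_ofReal]
  rw [← integral_complex_ofReal]
  simp only [hexpand]
  rw [integral_finsetSum _ fun j _ => integrable_finsetSum _ fun k _ => hint _ _, inner_sum]
  refine Finset.sum_congr rfl fun j _ => ?_
  rw [integral_finsetSum _ fun k _ => hint _ _, map_sum, sum_inner]
  refine Finset.sum_congr rfl fun k _ => ?_
  rw [map_smul, inner_smul_left, inner_smul_right, hent, integral_const_mul]
  ring

open scoped ComplexOrder in
theorem nonneg_of_ent_eq_integral_pow (hν : ∀ n : ℕ, Integrable (fun s => s ^ n) ν)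
    (hA : ∀ j k, ent A j k = ∫ s, (s : ℂ) ^ (j + k) ∂ν) : 0 ≤ A := by
  have hinner : ∀ x, 0 ≤ ⟪A x, x⟫_ℂ := fun x => by
    have hcont : Continuous fun y : l2 => ⟪A y, y⟫_ℂ := by fun_prop
    refine ge_of_tendsto' ((hcont.tendsto x).comp (hasSum_ee x)) fun t => ?_
    rw [Function.comp_apply, inner_sum_smul_ee_eq_integral_norm_sq hν hA]
    exact Complex.zero_le_real.2 (integral_nonneg fun s => by positivity)
  rw [ContinuousLinearMap.nonneg_iff_isPositive, ContinuousLinearMap.isPositive_iff_complex]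
  intro x
  obtain ⟨hre, him⟩ := Complex.nonneg_iff.1 (hinner x)
  exact ⟨Complex.ext rfl him, hre⟩

theorem isUnit_one_add_of_nonneg (hA : 0 ≤ A) : IsUnit (1 + A) :=
  CStarAlgebra.isUnit_of_le 1 (le_add_of_nonneg_right hA)

end MomentMatrices

section TwoPi

instance fact_two_pi_pos : Fact (0 < 2 * Real.pi) := ⟨Real.two_pi_pos⟩

theorem fc_eq_fourierCoeff (f : AddCircle (2 * Real.pi) → ℂ) (k : ℤ) :
    fc (fun θ => f θ) k = fourierCoeff f k := by
  rw [fourierCoeff_eq_intervalIntegral f k 0, fc, zero_add, Complex.real_smul]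
  congr 1
  refine intervalIntegral.integral_congr fun θ _ => ?_
  rw [smul_eq_mul, mul_comm, fourier_coe_apply]
  congr 2
  push_cast
  have : (Real.pi : ℂ) ≠ 0 := by exact_mod_cast Real.pi_ne_zero
  field_simp

theorem coe_toCircle_two_pi (θ : ℝ) :
    (AddCircle.toCircle (θ : AddCircle (2 * Real.pi)) : ℂ) = Complex.exp (I * θ) := by
  rw [AddCircle.toCircle_apply_mk, div_self Real.two_pi_pos.ne', one_mul, Circle.coe_exp, mul_comm]

/-- The function `χ` as a function on the circle `ℝ / 2πℤ`. -/
def chiCircle (x : AddCircle (2 * Real.pi)) : ℂ :=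
  if 0 < (AddCircle.toCircle x : ℂ).im then I else -I

theorem chiCircle_coe (θ : ℝ) : chiCircle θ = chi θ := by
  rw [chiCircle, chi, coe_toCircle_two_pi, mul_comm, Complex.exp_ofReal_mul_I_im]

theorem norm_chiCircle (x : AddCircle (2 * Real.pi)) : ‖chiCircle x‖ = 1 := by
  unfold chiCircle
  split_ifs <;> simp

theorem chiCircle_mul_self (x : AddCircle (2 * Real.pi)) : chiCircle x * chiCircle x = -1 := by
  unfold chiCircle
  split_ifs <;> simp

theorem measurable_chiCircle : Measurable chiCircle :=
  .ite (measurableSet_lt measurable_const (by fun_prop)) measurable_const measurable_const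

theorem memLp_top_chiCircle : MemLp chiCircle ∞ haarAddCircle :=
  .of_bound measurable_chiCircle.aestronglyMeasurable 1 (.of_forall fun x => (norm_chiCircle x).le)

theorem ae_im_toCircle_ne_zero :
    ∀ᵐ x : AddCircle (2 * Real.pi) ∂haarAddCircle, (AddCircle.toCircle x : ℂ).im ≠ 0 := by
  have hsub : {x : AddCircle (2 * Real.pi) | (AddCircle.toCircle x : ℂ).im = 0} ⊆
      {0, ((Real.pi : ℝ) : AddCircle (2 * Real.pi))} := by
    rintro ⟨θ⟩ hθ
    change (AddCircle.toCircle (θ : AddCircle (2 * Real.pi)) : ℂ).im = 0 at hθ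
    rw [coe_toCircle_two_pi, mul_comm, Complex.exp_ofReal_mul_I_im] at hθ
    exact Real.Angle.sin_eq_zero_iff.1 hθ
  have : Nontrivial (AddCircle (2 * Real.pi)) := ⟨(Real.pi : ℝ), 0, Real.Angle.pi_ne_zero⟩
  have : (𝓝[≠] (0 : AddCircle (2 * Real.pi))).NeBot :=
    ConnectedSpace.neBot_nhdsWithin_compl_of_nontrivial_of_t1space 0
  simpa only [ae_iff, not_not] using ((Set.toFinite _).subset hsub).measure_zero haarAddCircle

theorem chiCircle_mul_chiCircle_neg :
    ∀ᵐ x ∂haarAddCircle, chiCircle x * chiCircle (-x) = 1 := by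
  filter_upwards [ae_im_toCircle_ne_zero] with x hx
  rw [chiCircle, chiCircle, AddCircle.toCircle_neg, Circle.coe_inv_eq_conj, Complex.conj_im]
  rcases hx.lt_or_gt with h | h <;> simp [h, h.le.not_gt]

theorem intervalIntegrable_chi_mul {g : ℝ → ℂ} (hg : Continuous g) (a b : ℝ) :
    IntervalIntegrable (fun θ => chi θ * g θ) volume a b := by
  have hchi : Measurable chi := by
    convert! measurable_chiCircle.comp AddCircle.measurable_mk' using 1
    exact funext fun θ => (chiCircle_coe θ).symm
  have hgint := hg.intervalIntegrable (μ := volume) a b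
  rw [intervalIntegrable_iff] at hgint ⊢
  refine hgint.bdd_mul (c := 1) hchi.aestronglyMeasurable (.of_forall fun θ => ?_)
  rw [← chiCircle_coe, norm_chiCircle]

theorem integral_chi_mul {g : ℝ → ℂ} (hg : Continuous g) :
    ∫ θ in (0 : ℝ)..(2 * Real.pi), chi θ * g θ =
      I * ((∫ θ in (0 : ℝ)..Real.pi, g θ) - ∫ θ in Real.pi..(2 * Real.pi), g θ) := by
  have hint := intervalIntegrable_chi_mul hg
  have hpos : ∫ θ in (0 : ℝ)..Real.pi, chi θ * g θ = ∫ θ in (0 : ℝ)..Real.pi, I * g θ := by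
    refine intervalIntegral.integral_congr_Ioo_of_le Real.pi_pos.le fun θ hθ => ?_
    simp only [chi, if_pos (Real.sin_pos_of_mem_Ioo hθ)]
  have hneg : ∫ θ in Real.pi..(2 * Real.pi), chi θ * g θ =
      ∫ θ in Real.pi..(2 * Real.pi), -I * g θ := by
    refine intervalIntegral.integral_congr_Ioo_of_le (by linarith [Real.pi_pos]) fun θ hθ => ?_
    have hsin : Real.sin θ < 0 := by
      rw [← Real.sin_sub_two_pi]
      exact Real.sin_neg_of_neg_of_neg_pi_lt (by linarith [hθ.2]) (by linarith [hθ.1])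
    simp only [chi, if_neg hsin.le.not_gt]
  rw [← intervalIntegral.integral_add_adjacent_intervals (hint 0 Real.pi) (hint _ _), hpos, hneg,
    intervalIntegral.integral_const_mul, intervalIntegral.integral_const_mul]
  ring

theorem integral_exp_neg_I_mul {w : ℂ} (hw : w ≠ 0) (a b : ℝ) :
    ∫ θ : ℝ in a..b, Complex.exp (-(I * w * θ)) =
      I * (Complex.exp (-(I * w * b)) - Complex.exp (-(I * w * a))) / w := by
  have h := integral_exp_mul_complex (a := a) (b := b)
    (neg_ne_zero.2 (mul_ne_zero Complex.I_ne_zero hw))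
  simp only [neg_mul] at h
  rw [h]
  field_simp
  rw [Complex.I_sq]
  ring

theorem fourierCoeff_chiCircle {n : ℤ} (hn : n ≠ 0) :
    fourierCoeff chiCircle n = (1 - (-1) ^ n) / (Real.pi * n) := by
  have hn' : (n : ℂ) ≠ 0 := by exact_mod_cast hn
  have hexp : Complex.exp (-(I * n * Real.pi)) = (-1) ^ n := by
    have : -(I * n * Real.pi) = n * -(Real.pi * I) := by ring
    rw [this, Complex.exp_int_mul, Complex.exp_neg, Complex.exp_pi_mul_I]
    norm_num
  have hexp' : Complex.exp (-(I * n * (2 * Real.pi : ℝ))) = 1 := by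
    rw [Complex.exp_eq_one_iff]
    exact ⟨-n, by push_cast; ring⟩
  rw [← fc_eq_fourierCoeff]
  simp only [chiCircle_coe]
  rw [fc, integral_chi_mul (by fun_prop), integral_exp_neg_I_mul hn',
    integral_exp_neg_I_mul hn', hexp, hexp']
  push_cast
  simp only [mul_zero, neg_zero, Complex.exp_zero]
  field_simp
  rw [Complex.I_sq]
  ring

theorem fourierCoeff_chiCircle_add_one (m : ℕ) :
    fourierCoeff chiCircle ((m : ℤ) + 1) =
      ∫ s, (s : ℂ) ^ m ∂(ENNReal.ofReal Real.pi⁻¹ • volume.restrict (Set.Ioc (-1 : ℝ) 1)) := by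
  have hmoment : ∫ s : ℝ in (-1)..1, (s : ℂ) ^ m = (1 - (-1) ^ (m + 1)) / (m + 1) := by
    simp only [← Complex.ofReal_pow]
    rw [intervalIntegral.integral_ofReal, integral_pow]
    push_cast
    rw [one_pow]
  rw [fourierCoeff_chiCircle (by omega), integral_smul_measure,
    ← intervalIntegral.integral_of_le (by norm_num), hmoment,
    ENNReal.toReal_ofReal (inv_nonneg.2 Real.pi_pos.le), Complex.real_smul]
  have : (m : ℂ) + 1 ≠ 0 := by exact_mod_cast m.succ_ne_zero
  have hpow : (-1 : ℂ) ^ ((m : ℤ) + 1) = (-1) ^ (m + 1) := by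
    exact_mod_cast zpow_natCast (-1 : ℂ) (m + 1)
  rw [hpow]
  push_cast
  field_simp

theorem isUnit_one_add_hankelOp_chiCircle : IsUnit (1 + hankelOp memLp_top_chiCircle) := by
  refine isUnit_one_add_of_nonneg (nonneg_of_ent_eq_integral_pow
    (ν := ENNReal.ofReal Real.pi⁻¹ • volume.restrict (Set.Ioc (-1 : ℝ) 1)) (fun n => ?_)
    fun j k => ?_)
  · exact (continuous_pow n).integrableOn_Ioc.integrable.smul_measure ENNReal.ofReal_ne_top
  · rw [ent_hankelOp, ← fourierCoeff_chiCircle_add_one, Nat.cast_add]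

end TwoPi

section DiskAlgebra

theorem diffContOnCl_tsum_mul_pow {γ : ℕ → ℂ} (hγ : Summable fun k => ‖γ k‖) :
    DiffContOnCl ℂ (fun z => ∑' k, γ k * z ^ k) (Metric.ball 0 1) := by
  have hbound : ∀ (k : ℕ) (z : ℂ), z ∈ Metric.closedBall (0 : ℂ) 1 → ‖γ k * z ^ k‖ ≤ ‖γ k‖ :=
    fun k z hz => by
      rw [norm_mul, norm_pow]
      exact mul_le_of_le_one_right (norm_nonneg _)
        (pow_le_one₀ (norm_nonneg _) (mem_closedBall_zero_iff.1 hz))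
  refine ⟨?_, ?_⟩
  · exact Complex.differentiableOn_tsum_of_summable_norm hγ (fun k => by fun_prop)
      Metric.isOpen_ball fun k z hz => hbound k z (Metric.ball_subset_closedBall hz)
  · rw [closure_ball _ one_ne_zero]
    exact continuousOn_tsum (fun k => by fun_prop) hγ hbound

theorem fourierCoeff_toCircle_of_neg {G : ℂ → ℂ} (hG : DiffContOnCl ℂ G (Metric.ball 0 1)) {n : ℤ}
    (hn : n < 0) :
    fourierCoeff (fun x : AddCircle (2 * Real.pi) => G (AddCircle.toCircle x)) n = 0 := by
  obtain ⟨m, rfl⟩ : ∃ m : ℕ, n = -(m + 1) := ⟨(-n - 1).toNat, by omega⟩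
  have hz : DiffContOnCl ℂ (fun z => z ^ m * G z) (Metric.ball 0 1) :=
    ((Differentiable.pow differentiable_id m).diffContOnCl).smul hG
  have hcauchy := hz.circleIntegral_eq_zero zero_le_one
  have hintegrand : ∀ θ : ℝ, G (AddCircle.toCircle (θ : AddCircle (2 * Real.pi))) *
      Complex.exp (-(I * (-(m + 1) : ℤ) * θ)) =
        -I * (deriv (circleMap 0 1) θ • (circleMap 0 1 θ ^ m * G (circleMap 0 1 θ))) := fun θ => by
    have hcircle : circleMap 0 1 θ = Complex.exp (I * θ) := by simp [circleMap, mul_comm]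
    have hexp : Complex.exp (-(I * (-(m + 1) : ℤ) * θ)) = Complex.exp (I * θ) ^ (m + 1) := by
      rw [← Complex.exp_nat_mul]
      push_cast
      ring_nf
    rw [deriv_circleMap, coe_toCircle_two_pi, hcircle, hexp, smul_eq_mul]
    linear_combination (Complex.exp (I * θ) ^ (m + 1) * G (Complex.exp (I * θ))) * Complex.I_sq
  rw [← fc_eq_fourierCoeff, fc]
  simp only [hintegrand]
  rw [intervalIntegral.integral_const_mul]
  exact mul_eq_zero_of_right _ (mul_eq_zero_of_right _ hcauchy)

theorem memHInfty_toCircle {G : ℂ → ℂ} (hG : DiffContOnCl ℂ G (Metric.ball 0 1)) :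
    MemHInfty fun x : AddCircle (2 * Real.pi) => G (AddCircle.toCircle x) where
  memLp_top := memLp_top_of_continuous <|
    hG.continuousOn.comp_continuous (by fun_prop) fun x => by
      rw [closure_ball _ one_ne_zero]
      simp [Circle.norm_coe]
  fourierCoeff_eq_zero _ hn := fourierCoeff_toCircle_of_neg hG hn

theorem memHInfty_inv_toCircle {G : ℂ → ℂ} (hG : DiffContOnCl ℂ G (Metric.ball 0 1))
    (hG0 : ∀ z : ℂ, ‖z‖ ≤ 1 → G z ≠ 0) :
    MemHInfty fun x : AddCircle (2 * Real.pi) => (G (AddCircle.toCircle x))⁻¹ :=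
  memHInfty_toCircle (hG.inv fun z hz => hG0 z (by simpa [closure_ball] using hz))

end DiskAlgebra

theorem stmt3_general {c d : AddCircle (2 * Real.pi) → ℂ} (hc : MemHInfty c) (hd : MemHInfty d)
    (hcd : ∀ᵐ x ∂haarAddCircle, c x * d x = 1) (ψ : ℝ → ℂ)
    (hψ : ∀ θ : ℝ, ψ θ = c (-θ : ℝ) * d θ * chi θ) (A : l2 →L[ℂ] l2)
    (hA : ∀ j k : ℕ, ent A j k = (if j = k then 1 else 0) + fc ψ ((j : ℤ) + k + 1)) :
    ∃ A' : l2 →L[ℂ] l2, A ∘L A' = 1 ∧ A' ∘L A = 1 := by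
  let φ : AddCircle (2 * Real.pi) → ℂ := fun x => c (-x) * d x * chiCircle x
  have hφ : MemLp φ ∞ haarAddCircle :=
    memLp_top_chiCircle.mul (r := ∞) (hd.memLp_top.mul (r := ∞) (memLp_comp_neg hc.memLp_top))
  have hψφ : ψ = fun θ : ℝ => φ θ := funext fun θ => by
    rw [hψ, ← chiCircle_coe, AddCircle.coe_neg]
  have hAφ : A = 1 + hankelOp hφ := ext_ent fun j k => by
    rw [hA, ent_one_add_hankelOp, hψφ, fc_eq_fourierCoeff]
  have hunit : IsUnit (1 + hankelOp hφ) :=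
    isUnit_one_add_hankelOp_of_factorization hc hd hcd memLp_top_chiCircle
      chiCircle_mul_chiCircle_neg hφ (.of_forall fun _ => rfl) isUnit_one_add_hankelOp_chiCircle
      fun _ => eq_zero_of_mulOp_flipOp_eq_self memLp_top_chiCircle (.of_forall chiCircle_mul_self)
  rw [hAφ]
  exact isUnit_iff_exists.1 hunit

/-- Let `c₊(z) = Σ γ_k z^k` with `Σ|γ_k| < ∞`, nonvanishing on the closed unit disk,
and `ψ(e^{iθ}) = c₊(e^{−iθ}) c₊(e^{iθ})⁻¹ χ(e^{iθ})`.  Then any bounded operator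
`A = I + H(ψ)` on ℓ²(ℕ) is invertible. -/
theorem stmt3 (γ : ℕ → ℂ) (hγ : Summable fun k => ‖γ k‖)
    (hnz : ∀ z : ℂ, ‖z‖ ≤ 1 → (∑' k : ℕ, γ k * z ^ k) ≠ 0)
    (ψ : ℝ → ℂ)
    (hψ : ∀ θ : ℝ, ψ θ =
      (∑' k : ℕ, γ k * Complex.exp (-(Complex.I * θ)) ^ k) *
        (∑' k : ℕ, γ k * Complex.exp (Complex.I * θ) ^ k)⁻¹ * chi θ)
    (A : l2 →L[ℂ] l2)
    (hA : ∀ j k : ℕ, ent A j k =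
      (if j = k then 1 else 0) + fc ψ ((j : ℤ) + k + 1)) :
    ∃ A' : l2 →L[ℂ] l2, A ∘L A' = 1 ∧ A' ∘L A = 1 :=
  stmt3_general (memHInfty_toCircle (diffContOnCl_tsum_mul_pow hγ))
    (memHInfty_inv_toCircle (diffContOnCl_tsum_mul_pow hγ) hnz)
    (.of_forall fun x => mul_inv_cancel₀ (hnz _ (Circle.norm_coe _).le)) ψ
    (fun θ => by rw [hψ, coe_toCircle_two_pi, coe_toCircle_two_pi, Complex.ofReal_neg, mul_neg])
    A hA

end
end

section
/- Let a : T → ℂ have absolutely summable Fourier coefficients (Σ_{k∈ℤ}|a_k| < ∞), be nonvanishing on T, and be even (a_k = a_{−k} for all k). Then there exist G ∈ ℂ and a sequence (γ_k)_{k≥0} with Σ|γ_k| < ∞ such that the function a₊(z) = Σ_{k≥0} γ_k z^k satisfies a₊(0) = 1, a₊(z) ≠ 0 for all |z| ≤ 1, and a(e^{iθ}) = a₊(e^{−iθ}) · G · a₊(e^{iθ}) for all θ; moreover G = exp([ℓ]_0) for any continuous function ℓ : T → ℂ with a = exp(ℓ), where [ℓ]_0 = (1/(2π))∫_0^{2π}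 ℓ(e^{iθ}) dθ. -/
/-!
In a commutative Banach algebra `exp` is an open map, so a connected set of units containing `1`
lies in its range. Wiener's `1/f` theorem, read off the characters of `ℓ¹(ℤ)`, says that an
absolutely convergent Fourier series without zeros is a unit of `ℓ¹(ℤ)`. Together they show that
such a series with a continuous logarithm has its logarithm in `ℓ¹(ℤ)`: after division by the
exponential of a trigonometric polynomial its values lie within distance `1` of `1`, hence in a
convex set of units. A nonvanishing even function has winding number zero, and its logarithm `u`
is again even, so `u = q(z⁻¹) + u₀ + q(z)` with `q(0) = 0`; exponentiating gives `a₊ = exp q` and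
`G = exp u₀`.
-/

open Filter MeasureTheory

noncomputable section

section Exp

open NormedSpace

variable {A : Type*} [NormedCommRing A] [NormedAlgebra ℝ A] [CompleteSpace A]

theorem isOpenMap_exp : IsOpenMap (exp : A → A) := by
  let +nondep : NormedAlgebra ℚ A := .restrictScalars ℚ ℝ A
  refine IsOpenMap.of_nhds_le fun x => ?_
  refine ((hasStrictFDerivAt_exp (𝕂 := ℝ) (x := x)).map_nhds_eq_of_surj ?_).ge
  obtain ⟨u, hu⟩ := isUnit_exp x
  refine LinearMap.range_eq_top.2 fun y => ⟨↑u⁻¹ * y, ?_⟩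
  simp [← hu]

open Pointwise in
theorem subset_range_exp_of_isPreconnected {s : Set A} (hs : IsPreconnected s) (h1 : 1 ∈ s)
    (hu : ∀ a ∈ s, IsUnit a) : s ⊆ Set.range exp := by
  let +nondep : NormedAlgebra ℚ A := .restrictScalars ℚ ℝ A
  -- `t` is the union of the nontrivial cosets of the open subgroup `range exp` of the units.
  let t : Set A := ⋃ u ∈ {u : Aˣ | (u : A) ∉ Set.range exp}, u • Set.range exp
  have ht : IsOpen t := isOpen_biUnion fun u _ => isOpenMap_exp.isOpen_range.smul u
  have hdisj : Disjoint (Set.range exp) t := by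
    refine Set.disjoint_iUnion₂_right.2 fun u hu => Set.disjoint_left.2 ?_
    rintro _ ⟨x, rfl⟩ ⟨_, ⟨y, rfl⟩, hxy : (u : A) * exp y = exp x⟩
    refine hu ⟨x - y, ?_⟩
    rw [sub_eq_add_neg, exp_add, ← hxy, mul_assoc, ← exp_add, add_neg_cancel, exp_zero, mul_one]
  refine hs.subset_left_of_subset_union isOpenMap_exp.isOpen_range ht hdisj (fun a ha => ?_)
    ⟨1, h1, 0, exp_zero⟩
  obtain ⟨u, rfl⟩ := hu a ha
  refine or_iff_not_imp_left.2 fun hu => Set.mem_biUnion hu ?_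
  exact ⟨1, ⟨0, exp_zero⟩, mul_one (u : A)⟩

theorem exists_exp_eq_of_map_eq_exp {B F : Type*} [NormedCommRing B] [NormedAlgebra ℝ B]
    [CompleteSpace B] [FunLike F A B] [RingHomClass F A B] (φ : F) [IsLocalHom φ]
    (hφ : Continuous φ) (hd : DenseRange φ) {a : A} {b : B} (h : φ a = exp b) : ∃ x, exp x = a := by
  let +nondep : NormedAlgebra ℚ A := .restrictScalars ℚ ℝ A
  let +nondep : NormedAlgebra ℚ B := .restrictScalars ℚ ℝ B
  obtain ⟨p, hp⟩ : ∃ p, exp (b - φ p) ∈ Metric.ball (1 : B) 1 := by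
    refine hd.exists_mem_open (s := (fun y => exp (b - y)) ⁻¹' Metric.ball 1 1) ?_ ⟨b, by simp⟩
    exact Metric.isOpen_ball.preimage (exp_continuous.comp (continuous_const.sub continuous_id))
  let s : Set A := φ ⁻¹' Metric.ball 1 1
  have hconn : IsPreconnected s :=
    ((convex_ball 1 1).is_linear_preimage ⟨map_add φ, map_real_smul φ hφ⟩).isPreconnected
  have hunit (c : A) (hc : c ∈ s) : IsUnit c :=
    isUnit_of_map_unit φ c <| by
      simpa using isUnit_one_sub_of_norm_lt_one (mem_ball_iff_norm'.1 hc)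
  have hmem : a * exp (-p) ∈ s := by
    simpa only [s, Set.mem_preimage, map_mul, h, map_exp φ hφ, map_neg, ← exp_add,
      ← sub_eq_add_neg] using hp
  obtain ⟨x, hx⟩ := subset_range_exp_of_isPreconnected hconn (by simp [s]) hunit hmem
  refine ⟨x + p, ?_⟩
  rw [exp_add, hx, mul_assoc, ← exp_add, neg_add_cancel, exp_zero, mul_one]

end Exp

section Log

open Complex

theorem eq_of_exp_comp_eq {X : Type*} [TopologicalSpace X] [PreconnectedSpace X] {u v : X → ℂ}
    (hu : Continuous u) (hv : Continuous v) (h : ∀ x, exp (u x) = exp (v x)) {x₀ : X}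
    (hx₀ : u x₀ = v x₀) : u = v :=
  Complex.isCoveringMap_exp.eq_of_comp_eq hu hv (funext fun x => Subtype.ext (h x)) x₀ hx₀

theorem exists_int_eq_add_of_exp_comp_eq {X : Type*} [TopologicalSpace X] [ConnectedSpace X]
    {u v : X → ℂ} (hu : Continuous u) (hv : Continuous v) (h : ∀ x, exp (u x) = exp (v x)) :
    ∃ n : ℤ, ∀ x, u x = v x + n * (2 * Real.pi * I) := by
  obtain ⟨x₀⟩ := ‹ConnectedSpace X›.toNonempty
  obtain ⟨n, hn⟩ := exp_eq_exp_iff_exists_int.1 (h x₀)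
  refine ⟨n, congrFun <| eq_of_exp_comp_eq hu (hv.add continuous_const) (fun x => ?_) hn⟩
  rw [h, exp_eq_exp_iff_exists_int]
  exact ⟨-n, by push_cast; ring⟩

theorem exp_intervalAverage_eq_of_exp_comp_eq {u v : ℝ → ℂ} (hu : Continuous u) (hv : Continuous v)
    (h : ∀ x, exp (u x) = exp (v x)) {a b : ℝ} (hab : a ≠ b) :
    exp (⨍ x in a..b, u x) = exp (⨍ x in a..b, v x) := by
  obtain ⟨n, hn⟩ := exists_int_eq_add_of_exp_comp_eq hu hv h
  rw [exp_eq_exp_iff_exists_int]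
  refine ⟨n, ?_⟩
  simp only [interval_average_eq, hn]
  rw [intervalIntegral.integral_add (hv.intervalIntegrable _ _) intervalIntegrable_const,
    intervalIntegral.integral_const, smul_add, inv_smul_smul₀ (sub_ne_zero.2 hab.symm)]

theorem exists_continuousMap_exp_eq_of_even {T : ℝ} (g : C(AddCircle T, ℂ)) (hg : ∀ x, g x ≠ 0)
    (heven : Function.Even g) : ∃ b : C(AddCircle T, ℂ), ∀ x, exp (b x) = g x := by
  obtain ⟨L, ⟨-, hL⟩, -⟩ := isCoveringMapOn_exp.existsUnique_continuousMap_lifts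
    (⟨fun t : ℝ => g t, by fun_prop⟩ : C(ℝ, ℂ)) (exp_log (hg (0 : ℝ))) fun t => hg t
  replace hL (t : ℝ) : exp (L t) = g t := congrFun hL t
  have L_neg : (fun t => L (-t)) = L :=
    eq_of_exp_comp_eq (by fun_prop) (by fun_prop)
      (fun t => by simp [hL, heven (t : AddCircle T)]) (x₀ := 0) (by simp)
  have L_periodic : Function.Periodic L T := by
    refine congrFun <| eq_of_exp_comp_eq (by fun_prop) (by fun_prop) (fun t => ?_)
      (x₀ := -(T / 2)) ?_
    · simp [hL]
    · rw [← congrFun L_neg (-(T / 2))]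
      ring_nf
  exact ⟨⟨L_periodic.lift, continuous_quot_lift _ L.continuous⟩,
    fun x => QuotientAddGroup.induction_on x hL⟩

end Log

theorem exp_continuousMap_apply {X A : Type*} [TopologicalSpace X] [CompactSpace X] [NormedRing A]
    [NormedAlgebra ℚ A] [CompleteSpace A] (g : C(X, A)) (x : X) :
    NormedSpace.exp g x = NormedSpace.exp (g x) :=
  NormedSpace.map_exp ((Pi.evalRingHom _ x).comp ContinuousMap.coeFnRingHom)
    (continuous_eval_const x) g

theorem even_fourierCoeff {E : Type*} [NormedAddCommGroup E] [NormedSpace ℂ E] {T : ℝ}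
    [Fact (0 < T)] {g : AddCircle T → E} (hg : Function.Even g) :
    Function.Even (fourierCoeff g) := fun k => by
  rw [fourierCoeff, ← integral_neg_eq_self, fourierCoeff]
  simp [hg _, fourier_apply]

theorem norm_fourier_apply_le {T : ℝ} (k : ℤ) (x : AddCircle T) : ‖fourier k x‖ ≤ 1 :=
  (Circle.norm_coe _).le

theorem fourier_two_pi_coe_apply (k : ℤ) (θ : ℝ) :
    fourier k (θ : AddCircle (2 * Real.pi)) = Complex.exp (Complex.I * k * θ) := by
  rw [fourier_coe_apply, Complex.ofReal_mul, Complex.ofReal_ofNat, mul_assoc, mul_assoc,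
    mul_div_assoc]
  congr 1
  field_simp

/-- The Banach space `ℓ¹(M)` of absolutely summable families `M → 𝕜`. A type synonym of `lp`,
because `lp` carries the pointwise product and here multiplication is convolution. -/
def L1Algebra (𝕜 M : Type*) [NontriviallyNormedField 𝕜] : Type _ := lp (fun _ : M => 𝕜) 1

namespace L1Algebra

section Module

variable {𝕜 M F : Type*} [NontriviallyNormedField 𝕜]

instance : NormedAddCommGroup (L1Algebra 𝕜 M) :=
  inferInstanceAs (NormedAddCommGroup (lp (fun _ : M => 𝕜) 1))

instance : NormedSpace 𝕜 (L1Algebra 𝕜 M) :=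
  inferInstanceAs (NormedSpace 𝕜 (lp (fun _ : M => 𝕜) 1))

instance [CompleteSpace 𝕜] : CompleteSpace (L1Algebra 𝕜 M) :=
  inferInstanceAs (CompleteSpace (lp (fun _ : M => 𝕜) 1))

instance : FunLike (L1Algebra 𝕜 M) M 𝕜 where
  coe f := f.1
  coe_injective := Subtype.val_injective

theorem add_apply (f g : L1Algebra 𝕜 M) (m : M) : (f + g) m = f m + g m := rfl

theorem smul_apply (c : 𝕜) (f : L1Algebra 𝕜 M) (m : M) : (c • f) m = c * f m := rfl

theorem hasSum_norm (f : L1Algebra 𝕜 M) : HasSum (fun m => ‖f m‖) ‖f‖ := by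
  simpa using! lp.hasSum_norm (p := 1) (by simp) (show lp (fun _ : M => 𝕜) 1 from f)

/-- An absolutely summable family, as an element of `ℓ¹(M)`. -/
def ofSummable (c : M → 𝕜) (hc : Summable fun m => ‖c m‖) : L1Algebra 𝕜 M :=
  (⟨c, (memℓp_gen_iff (by simp)).2 (by simpa using hc)⟩ : lp (fun _ : M => 𝕜) 1)

@[simp]
theorem ofSummable_apply (c : M → 𝕜) (hc : Summable fun m => ‖c m‖) (m : M) :
    ofSummable c hc m = c m := rfl

open Classical in
/-- The unit point mass at `m` in `ℓ¹(M)`. -/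
def single (m : M) : L1Algebra 𝕜 M := lp.single 1 m 1

theorem single_apply_self (m : M) : (single m : L1Algebra 𝕜 M) m = 1 := by
  classical
  exact lp.single_apply_self (E := fun _ : M => 𝕜) 1 m 1

theorem single_apply_of_ne {m k : M} (h : k ≠ m) : (single m : L1Algebra 𝕜 M) k = 0 := by
  classical
  exact lp.single_apply_ne (E := fun _ : M => 𝕜) 1 m 1 h

theorem norm_single (m : M) : ‖(single m : L1Algebra 𝕜 M)‖ = 1 := by
  classical
  exact (lp.norm_single (E := fun _ : M => 𝕜) one_pos m 1).trans norm_one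

theorem hasSum_smul_single (f : L1Algebra 𝕜 M) : HasSum (fun m => f m • single m) f := by
  classical
  refine (lp.hasSum_single (E := fun _ : M => 𝕜) ENNReal.one_ne_top f).congr_fun fun m => ?_
  refine (lp.single_smul (E := fun _ : M => 𝕜) 1 m (f m) 1).symm.trans ?_
  rw [smul_eq_mul, mul_one]
  rfl

theorem continuousLinearMap_ext [AddCommMonoid F] [Module 𝕜 F] [TopologicalSpace F] [T2Space F]
    {φ ψ : L1Algebra 𝕜 M →L[𝕜] F} (h : ∀ m, φ (single m) = ψ (single m)) : φ = ψ := by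
  ext f
  refine (f.hasSum_smul_single.mapL φ).unique ((f.hasSum_smul_single.mapL ψ).congr_fun fun m => ?_)
  simp only [map_smul, h]

variable [NormedAddCommGroup F] [NormedSpace 𝕜 F] [CompleteSpace F]

theorem summable_smul (f : L1Algebra 𝕜 M) {φ : M → F} (hφ : ∀ m, ‖φ m‖ ≤ 1) :
    Summable fun m => f m • φ m :=
  .of_norm_bounded f.hasSum_norm.summable fun m => by
    rw [norm_smul]
    exact mul_le_of_le_one_right (norm_nonneg _) (hφ m)

/-- The continuous linear extension `f ↦ ∑ m, f m • φ m` to `ℓ¹(M)` of a map `φ` into the unit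
ball, expressing that `ℓ¹(M)` is the free Banach space on `M`. -/
def lift (φ : M → F) (hφ : ∀ m, ‖φ m‖ ≤ 1) : L1Algebra 𝕜 M →L[𝕜] F :=
  LinearMap.mkContinuous
    { toFun f := ∑' m, f m • φ m
      map_add' f g := by
        simp only [add_apply, add_smul]
        exact (f.summable_smul hφ).tsum_add (g.summable_smul hφ)
      map_smul' c f := by
        simp only [smul_apply, mul_smul, RingHom.id_apply]
        exact (f.summable_smul hφ).tsum_const_smul c }
    1 fun f => by
      rw [one_mul]
      refine tsum_of_norm_bounded f.hasSum_norm fun m => ?_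
      rw [norm_smul]
      exact mul_le_of_le_one_right (norm_nonneg _) (hφ m)

variable {φ : M → F} (hφ : ∀ m, ‖φ m‖ ≤ 1)

theorem hasSum_lift (f : L1Algebra 𝕜 M) : HasSum (fun m => f m • φ m) (lift φ hφ f) :=
  (f.summable_smul hφ).hasSum

@[simp]
theorem lift_single (m : M) : lift φ hφ (single m : L1Algebra 𝕜 M) = φ m := by
  classical
  refine (hasSum_lift hφ _).unique ((hasSum_ite_eq m (φ m)).congr_fun fun k => ?_)
  rcases eq_or_ne k m with rfl | h
  · simp [single_apply_self]
  · simp [single_apply_of_ne h, h]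

theorem norm_lift_le : ‖(lift φ hφ : L1Algebra 𝕜 M →L[𝕜] F)‖ ≤ 1 :=
  LinearMap.mkContinuous_norm_le _ zero_le_one _

end Module

section Ring

variable {𝕜 M : Type*} [NontriviallyNormedField 𝕜]

instance [Zero M] : One (L1Algebra 𝕜 M) := ⟨single 0⟩

theorem one_def [Zero M] : (1 : L1Algebra 𝕜 M) = single 0 := rfl

variable [CompleteSpace 𝕜]

/-- Convolution on `ℓ¹(M)`, as the bilinear extension of `single m * single n = single (m + n)`,
so that identities between convolutions need only be checked on point masses. -/
def mulCLM [Add M] : L1Algebra 𝕜 M →L[𝕜] L1Algebra 𝕜 M →L[𝕜] L1Algebra 𝕜 M :=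
  lift (fun m => lift (fun n => single (m + n)) fun _ => (norm_single _).le) fun _ =>
    norm_lift_le _

instance [Add M] : Mul (L1Algebra 𝕜 M) := ⟨fun f g => mulCLM f g⟩

theorem mulCLM_apply [Add M] (f g : L1Algebra 𝕜 M) : mulCLM f g = f * g := rfl

theorem single_mul_single [Add M] (m n : M) :
    (single m * single n : L1Algebra 𝕜 M) = single (m + n) := by
  rw [← mulCLM_apply, mulCLM, lift_single, lift_single]

theorem mulCLM_comm [AddCommMagma M] : (mulCLM : L1Algebra 𝕜 M →L[𝕜] _) = mulCLM.flip :=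
  continuousLinearMap_ext fun m => continuousLinearMap_ext fun n => by
    simp only [ContinuousLinearMap.flip_apply, mulCLM_apply, single_mul_single, add_comm]

protected theorem norm_mul_le [Add M] (f g : L1Algebra 𝕜 M) : ‖f * g‖ ≤ ‖f‖ * ‖g‖ := by
  simpa only [one_mul] using! mulCLM.le_of_opNorm₂_le_of_le (norm_lift_le _) le_rfl le_rfl

protected theorem mul_assoc [AddSemigroup M] (f g h : L1Algebra 𝕜 M) :
    f * g * h = f * (g * h) := by
  have assoc_single_single (l m : M) : mulCLM (single l * single m : L1Algebra 𝕜 M) =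
      (mulCLM (single l)).comp (mulCLM (single m)) :=
    continuousLinearMap_ext fun n => by
      simp only [ContinuousLinearMap.comp_apply, mulCLM_apply, single_mul_single, add_assoc]
  have assoc_single (l : M) : (mulCLM.flip h).comp (mulCLM (single l)) =
      (mulCLM (single l)).comp (mulCLM.flip h) :=
    continuousLinearMap_ext fun m => DFunLike.congr_fun (assoc_single_single l m) h
  have assoc : (mulCLM.flip h).comp (mulCLM.flip g) = mulCLM.flip (g * h) :=
    continuousLinearMap_ext fun l => DFunLike.congr_fun (assoc_single l) g
  exact DFunLike.congr_fun assoc f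

protected theorem one_mul [AddZeroClass M] (f : L1Algebra 𝕜 M) : 1 * f = f := by
  suffices h : mulCLM 1 = ContinuousLinearMap.id 𝕜 (L1Algebra 𝕜 M) from DFunLike.congr_fun h f
  refine continuousLinearMap_ext fun m => ?_
  rw [mulCLM_apply, one_def, single_mul_single, zero_add, ContinuousLinearMap.id_apply]

protected theorem mul_one [AddZeroClass M] (f : L1Algebra 𝕜 M) : f * 1 = f := by
  suffices h : mulCLM.flip 1 = ContinuousLinearMap.id 𝕜 (L1Algebra 𝕜 M) from
    DFunLike.congr_fun h f
  refine continuousLinearMap_ext fun m => ?_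
  rw [ContinuousLinearMap.flip_apply, mulCLM_apply, one_def, single_mul_single, add_zero,
    ContinuousLinearMap.id_apply]

instance [AddMonoid M] : NormedRing (L1Algebra 𝕜 M) where
  __ := (inferInstance : NormedAddCommGroup (L1Algebra 𝕜 M))
  left_distrib f g h := map_add (mulCLM f) g h
  right_distrib f g h := map_add (mulCLM.flip h) f g
  zero_mul f := map_zero (mulCLM.flip f)
  mul_zero f := map_zero (mulCLM f)
  mul_assoc := L1Algebra.mul_assoc
  one_mul := L1Algebra.one_mul
  mul_one := L1Algebra.mul_one
  norm_mul_le := L1Algebra.norm_mul_le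

instance [AddCommMonoid M] : NormedCommRing (L1Algebra 𝕜 M) where
  mul_comm f g := DFunLike.congr_fun (DFunLike.congr_fun mulCLM_comm f) g

instance [AddMonoid M] : NormedAlgebra 𝕜 (L1Algebra 𝕜 M) where
  __ := Algebra.ofModule (fun c f g => DFunLike.congr_fun (map_smul mulCLM c f) g)
    (fun c f g => map_smul (mulCLM f) c g)
  norm_smul_le := norm_smul_le

instance [AddMonoid M] : NormOneClass (L1Algebra 𝕜 M) := ⟨norm_single 0⟩

variable {B : Type*} [NormedRing B] [NormedAlgebra 𝕜 B] [CompleteSpace B]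

theorem lift_mul [AddMonoid M] (φ : M → B) (hφ : ∀ m, ‖φ m‖ ≤ 1)
    (hadd : ∀ m n, φ (m + n) = φ m * φ n) (f g : L1Algebra 𝕜 M) :
    lift φ hφ (f * g) = lift φ hφ f * lift φ hφ g := by
  have h : (ContinuousLinearMap.compL 𝕜 _ _ _ (lift φ hφ)).comp mulCLM =
      (ContinuousLinearMap.mul 𝕜 B).bilinearComp (lift φ hφ) (lift φ hφ) :=
    continuousLinearMap_ext fun m => continuousLinearMap_ext fun n => by
      simp [mulCLM_apply, single_mul_single, hadd]
  exact DFunLike.congr_fun (DFunLike.congr_fun h f) g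

/-- The continuous algebra homomorphism `f ↦ ∑ m, f m • φ m` on `ℓ¹(M)` induced by a monoid
homomorphism `φ` into the unit ball. -/
def liftAlgHom [AddMonoid M] (φ : Multiplicative M →* B) (hφ : ∀ m, ‖φ m‖ ≤ 1) :
    L1Algebra 𝕜 M →A[𝕜] B :=
  let L := lift (fun m => φ (.ofAdd m)) fun m => hφ (.ofAdd m)
  ⟨AlgHom.ofLinearMap L.toLinearMap ((lift_single _ 0).trans (map_one φ))
    (lift_mul _ _ fun m n => map_mul φ (.ofAdd m) (.ofAdd n)), L.cont⟩

theorem hasSum_liftAlgHom [AddMonoid M] (φ : Multiplicative M →* B) (hφ : ∀ m, ‖φ m‖ ≤ 1)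
    (f : L1Algebra 𝕜 M) : HasSum (fun m => f m • φ (.ofAdd m)) (liftAlgHom φ hφ f) :=
  hasSum_lift (fun m => hφ (.ofAdd m)) f

theorem liftAlgHom_single [AddMonoid M] (φ : Multiplicative M →* B) (hφ : ∀ m, ‖φ m‖ ≤ 1) (m : M) :
    liftAlgHom φ hφ (single m : L1Algebra 𝕜 M) = φ (.ofAdd m) :=
  lift_single (fun m => hφ (.ofAdd m)) m

/-- The point masses, as a monoid homomorphism into `ℓ¹(M)`; used to compare characters of
`ℓ¹(M)`. -/
def singleHom (𝕜 M : Type*) [NontriviallyNormedField 𝕜] [CompleteSpace 𝕜] [AddMonoid M] :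
    Multiplicative M →* L1Algebra 𝕜 M where
  toFun m := single m.toAdd
  map_one' := rfl
  map_mul' m n := (single_mul_single m.toAdd n.toAdd).symm

end Ring

section EvalPow

open NormedSpace

variable {𝕜 B : Type*} [NontriviallyNormedField 𝕜] [CompleteSpace 𝕜] [NormedRing B]
  [NormOneClass B] [NormedAlgebra 𝕜 B] [CompleteSpace B]

/-- Evaluation at `z` of the power series with coefficients in `ℓ¹(ℕ)`, for `‖z‖ ≤ 1`. -/
def evalPow (z : B) (hz : ‖z‖ ≤ 1) : L1Algebra 𝕜 ℕ →A[𝕜] B :=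
  liftAlgHom (powersHom B z) fun k =>
    (norm_pow_le z k.toAdd).trans (pow_le_one₀ (norm_nonneg z) hz)

theorem hasSum_evalPow {z : B} (hz : ‖z‖ ≤ 1) (f : L1Algebra 𝕜 ℕ) :
    HasSum (fun k => f k • z ^ k) (evalPow z hz f) :=
  hasSum_liftAlgHom (powersHom B z) _ f

theorem evalPow_zero (f : L1Algebra 𝕜 ℕ) : evalPow (0 : 𝕜) (by simp) f = f 0 :=
  (hasSum_evalPow _ f).unique <| by
    simpa using! hasSum_single (f := fun k => f k • (0 : 𝕜) ^ k) 0 fun k hk => by simp [hk]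

theorem evalPow_exp {z : ℂ} (hz : ‖z‖ ≤ 1) (f : L1Algebra ℂ ℕ) :
    evalPow z hz (exp f) = Complex.exp (evalPow z hz f) := by
  let +nondep : NormedAlgebra ℚ (L1Algebra ℂ ℕ) := .restrictScalars ℚ ℂ _
  rw [map_exp _ (map_continuous _), Complex.exp_eq_exp_ℂ]

end EvalPow

section FourierSeries

open NormedSpace

variable (T : ℝ) [hT : Fact (0 < T)]

/-- The Fourier monomials, as a monoid homomorphism from `ℤ`. -/
def fourierHom : Multiplicative ℤ →* C(AddCircle T, ℂ) where
  toFun k := fourier k.toAdd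
  map_one' := ContinuousMap.ext fun _ => fourier_zero
  map_mul' _ _ := ContinuousMap.ext fun _ => fourier_add

/-- Synthesis of a continuous function from absolutely summable Fourier coefficients; its range is
the Wiener algebra. -/
def fourierSeries : L1Algebra ℂ ℤ →A[ℂ] C(AddCircle T, ℂ) :=
  liftAlgHom (fourierHom T) fun _ => (fourier_norm _).le

theorem hasSum_fourierSeries (f : L1Algebra ℂ ℤ) :
    HasSum (fun k => f k • (fourier k : C(AddCircle T, ℂ))) (fourierSeries T f) :=
  hasSum_liftAlgHom (fourierHom T) _ f

theorem fourierSeries_single (k : ℤ) : fourierSeries T (single k) = fourier k :=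
  liftAlgHom_single (fourierHom T) _ k

theorem hasSum_fourierSeries_apply (f : L1Algebra ℂ ℤ) (x : AddCircle T) :
    HasSum (fun k => f k * fourier k x) (fourierSeries T f x) :=
  ContinuousMap.hasSum_apply (hasSum_fourierSeries T f) x

theorem denseRange_fourierSeries : DenseRange (fourierSeries T) := by
  have hspan : Submodule.span ℂ (Set.range (fourier (T := T))) ≤
      (fourierSeries T).toLinearMap.range :=
    Submodule.span_le.2 <| Set.range_subset_iff.2 fun k => ⟨single k, fourierSeries_single T k⟩
  have hdense := Submodule.topologicalClosure_mono hspan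
  rw [span_fourier_closure_eq_top] at hdense
  exact fun g => hdense (Submodule.mem_top (x := g))

theorem fourierCoeff_fourierSeries (f : L1Algebra ℂ ℤ) (k : ℤ) :
    fourierCoeff (fourierSeries T f) k = f k := by
  let coeffCLM : C(AddCircle T, ℂ) →L[ℂ] ℂ :=
    (innerSL ℂ (fourierLp 2 k)).comp (ContinuousMap.toLp 2 AddCircle.haarAddCircle ℂ)
  have hcoeff (g : C(AddCircle T, ℂ)) : coeffCLM g = fourierCoeff g k := by
    change inner ℂ (fourierLp 2 k) _ = _
    rw [← coe_fourierBasis, ← fourierBasis.repr_apply_apply, fourierBasis_repr]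
    exact fourierCoeff_toLp g k
  have h := (hasSum_fourierSeries T f).mapL coeffCLM
  rw [hcoeff] at h
  refine h.unique ((hasSum_ite_eq k (f k)).congr_fun fun l => ?_)
  rw [map_smul, hcoeff, fourierCoeff_fourier, Pi.single_apply]
  rcases eq_or_ne l k with rfl | hl
  · simp
  · simp [hl, hl.symm]

theorem exists_characterSpace_apply_eq (χ : WeakDual.characterSpace ℂ (L1Algebra ℂ ℤ)) :
    ∃ x : AddCircle T, ∀ f, χ f = fourierSeries T f x := by
  have norm_le (k : ℤ) : ‖χ (single k)‖ ≤ 1 := by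
    simpa only [norm_one, mul_one, norm_single] using!
      ContinuousLinearMap.le_of_opNorm_le _ (WeakDual.CharacterSpace.norm_le_norm_one χ) (single k)
  have hmul : χ (single 1) * χ (single (-1)) = 1 := by
    rw [← map_mul, single_mul_single, add_neg_cancel, ← one_def, map_one]
  have hnorm : ‖χ (single 1)‖ = 1 := by
    refine (norm_le 1).antisymm ?_
    calc 1 = ‖χ (single 1)‖ * ‖χ (single (-1))‖ := by rw [← norm_mul, hmul, norm_one]
      _ ≤ ‖χ (single 1)‖ := mul_le_of_le_one_right (norm_nonneg _) (norm_le _)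
  let z : Circle := ⟨χ (single 1), mem_sphere_zero_iff_norm.2 hnorm⟩
  let x := (AddCircle.homeomorphCircle hT.out.ne').symm z
  have hx : fourier 1 x = χ (single 1) := by
    rw [fourier_one, ← AddCircle.homeomorphCircle_apply hT.out.ne', Homeomorph.apply_symm_apply]
  have hchar : ((χ : L1Algebra ℂ ℤ →* ℂ).comp (singleHom ℂ ℤ)) =
      ((Pi.evalMonoidHom _ x).comp ContinuousMap.coeFnMonoidHom).comp (fourierHom T) :=
    MonoidHom.ext_mint hx.symm
  have hsingle : WeakDual.CharacterSpace.toCLM χ =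
      (ContinuousMap.evalCLM ℂ x).comp (fourierSeries T).toContinuousLinearMap :=
    continuousLinearMap_ext fun k =>
      (DFunLike.congr_fun hchar (.ofAdd k)).trans
        (DFunLike.congr_fun (fourierSeries_single T k) x).symm
  exact ⟨x, DFunLike.congr_fun hsingle⟩

instance isLocalHom_fourierSeries : IsLocalHom (fourierSeries T) where
  map_nonunit f hf := by
    by_contra h
    obtain ⟨χ, hχ⟩ := WeakDual.CharacterSpace.exists_apply_eq_zero h
    obtain ⟨x, hx⟩ := exists_characterSpace_apply_eq T χ
    exact (ContinuousMap.isUnit_iff_forall_ne_zero _).1 hf x (hx f ▸ hχ)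

variable {T}

theorem even_fourierSeries {f : L1Algebra ℂ ℤ} (hf : Function.Even f) :
    Function.Even (fourierSeries T f) := fun x => by
  refine ((Equiv.neg ℤ).hasSum_iff.2 (hasSum_fourierSeries_apply T f (-x))).unique
    ((hasSum_fourierSeries_apply T f x).congr_fun fun k => ?_)
  simp [hf k, fourier_apply]

theorem fourierSeries_exp_apply (f : L1Algebra ℂ ℤ) (x : AddCircle T) :
    fourierSeries T (exp f) x = Complex.exp (fourierSeries T f x) := by
  let +nondep : NormedAlgebra ℚ (L1Algebra ℂ ℤ) := .restrictScalars ℚ ℂ _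
  rw [map_exp _ (map_continuous _), exp_continuousMap_apply, Complex.exp_eq_exp_ℂ]

theorem exists_exp_eq_of_even {a : L1Algebra ℂ ℤ} (ha : Function.Even a)
    (hne : ∀ x, fourierSeries T a x ≠ 0) :
    ∃ u : L1Algebra ℂ ℤ, exp u = a ∧ Function.Even u := by
  have even_a := even_fourierSeries (T := T) ha
  obtain ⟨b, hb⟩ := exists_continuousMap_exp_eq_of_even _ hne even_a
  have ha_eq_exp : fourierSeries T a = exp b :=
    ContinuousMap.ext fun x => by rw [exp_continuousMap_apply, ← hb, Complex.exp_eq_exp_ℂ]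
  obtain ⟨u, rfl⟩ := exists_exp_eq_of_map_eq_exp (fourierSeries T) (map_continuous _)
    (denseRange_fourierSeries T) ha_eq_exp
  have even_u : Function.Even (fourierSeries T u) :=
    congrFun <| eq_of_exp_comp_eq (by fun_prop) (by fun_prop)
      (fun x => by simp only [← fourierSeries_exp_apply, even_a x]) (x₀ := 0) (by rw [neg_zero])
  have even_coeff := even_fourierCoeff even_u
  rw [funext (fourierCoeff_fourierSeries T u)] at even_coeff
  exact ⟨u, rfl, even_coeff⟩

/-- The coefficients of `u` at positive frequencies, with the one at frequency `0` replaced by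
`0`. -/
def analyticPart (u : L1Algebra ℂ ℤ) : L1Algebra ℂ ℕ :=
  ofSummable (fun k => if k = 0 then 0 else u k) <|
    (u.hasSum_norm.summable.comp_injective Nat.cast_injective).of_nonneg_of_le
      (fun _ => norm_nonneg _) fun k => by
        dsimp only [Function.comp_apply]
        split_ifs <;> simp

theorem fourierSeries_eq_of_even {u : L1Algebra ℂ ℤ} (hu : Function.Even u) (x : AddCircle T) :
    fourierSeries T u x =
      evalPow (fourier (-1) x) (norm_fourier_apply_le _ x) (analyticPart u) + u 0 +
        evalPow (fourier 1 x) (norm_fourier_apply_le _ x) (analyticPart u) := by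
  have hsum := (hasSum_fourierSeries_apply T u x).nat_add_neg
  have hsplit := ((hasSum_evalPow (norm_fourier_apply_le 1 x) (analyticPart u)).add
    (hasSum_evalPow (norm_fourier_apply_le (-1) x) (analyticPart u))).add
      (hasSum_ite_eq 0 (2 * u 0))
  have heq := hsum.unique (hsplit.congr_fun fun k => ?_)
  · rw [fourier_zero] at heq
    linear_combination heq
  · have hpow (n : ℤ) : fourier (k • n) x = fourier n x ^ k :=
      DFunLike.congr_fun (map_pow (fourierHom T) (.ofAdd n) k) x
    have hpos : fourier k x = fourier 1 x ^ k := by rw [← hpow, nsmul_one]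
    have hneg : fourier (-k) x = fourier (-1) x ^ k := by rw [← hpow, smul_neg, nsmul_one]
    rw [hu k, hpos, hneg]
    rcases eq_or_ne k 0 with rfl | hk
    · simp [analyticPart, two_mul]
    · simp [analyticPart, hk]

theorem exists_even_factorization {a : L1Algebra ℂ ℤ} (ha : Function.Even a)
    (hne : ∀ x, fourierSeries T a x ≠ 0) :
    ∃ (G : ℂ) (p : L1Algebra ℂ ℕ), p 0 = 1 ∧ (∀ (z : ℂ) hz, evalPow z hz p ≠ 0) ∧
      (∀ x : AddCircle T, fourierSeries T a x =
        evalPow (fourier (-1) x) (norm_fourier_apply_le _ x) p * G *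
          evalPow (fourier 1 x) (norm_fourier_apply_le _ x) p) ∧
      ∀ ℓ : ℝ → ℂ, Continuous ℓ → (∀ t : ℝ, fourierSeries T a t = Complex.exp (ℓ t)) →
        G = Complex.exp (⨍ t in 0..T, ℓ t) := by
  obtain ⟨u, rfl, hu⟩ := exists_exp_eq_of_even ha hne
  refine ⟨Complex.exp (u 0), exp (analyticPart u), ?_, fun z hz => ?_, fun x => ?_,
    fun ℓ hℓ h => ?_⟩
  · rw [← evalPow_zero, evalPow_exp, evalPow_zero]
    simp [analyticPart]
  · rw [evalPow_exp]
    exact Complex.exp_ne_zero _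
  · rw [evalPow_exp, evalPow_exp, ← Complex.exp_add, ← Complex.exp_add, fourierSeries_exp_apply,
      fourierSeries_eq_of_even hu]
  · have hmean : u 0 = ⨍ t in 0..T, fourierSeries T u t := by
      rw [← fourierCoeff_fourierSeries T u, fourierCoeff_eq_intervalIntegral _ _ 0,
        interval_average_eq]
      simp
    rw [hmean]
    refine exp_intervalAverage_eq_of_exp_comp_eq (by fun_prop) hℓ (fun t => ?_) hT.out.ne
    rw [← fourierSeries_exp_apply, h]

end FourierSeries

end L1Algebra

/-- Let `a` be a nonvanishing even function on the unit circle with absolutely summable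
Fourier coefficients `c : ℤ → ℂ` (so `a(e^{iθ}) = Σ_{k∈ℤ} c_k e^{ikθ}`).  Then there exist
`G ∈ ℂ` and an absolutely summable sequence `(γ_k)_{k≥0}` such that `a₊(z) = Σ γ_k z^k`
satisfies `a₊(0) = 1`, `a₊(z) ≠ 0` for `|z| ≤ 1`, and
`a(e^{iθ}) = a₊(e^{−iθ}) · G · a₊(e^{iθ})` for all `θ`; moreover `G = exp([ℓ]_0)` for any
continuous `2π`-periodic logarithm `ℓ` of `a`. -/
theorem stmt4 (c : ℤ → ℂ) (hc : Summable fun k => ‖c k‖)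
    (a : ℝ → ℂ)
    (ha : ∀ θ : ℝ, a θ = ∑' k : ℤ, c k * Complex.exp (Complex.I * k * θ))
    (heven : ∀ k : ℤ, c k = c (-k))
    (hnz : ∀ θ : ℝ, a θ ≠ 0) :
    ∃ (G : ℂ) (γ : ℕ → ℂ), Summable (fun k => ‖γ k‖) ∧
      γ 0 = 1 ∧
      (∀ z : ℂ, ‖z‖ ≤ 1 → (∑' k : ℕ, γ k * z ^ k) ≠ 0) ∧
      (∀ θ : ℝ, a θ =
        (∑' k : ℕ, γ k * Complex.exp (-(Complex.I * θ)) ^ k) * G *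
          (∑' k : ℕ, γ k * Complex.exp (Complex.I * θ) ^ k)) ∧
      (∀ ℓ : ℝ → ℂ, Continuous ℓ → Function.Periodic ℓ (2 * Real.pi) →
        (∀ θ : ℝ, a θ = Complex.exp (ℓ θ)) →
        G = Complex.exp (((1 / (2 * Real.pi) : ℝ) : ℂ) *
          ∫ θ in (0:ℝ)..(2 * Real.pi), ℓ θ)) := by
  have : Fact (0 < 2 * Real.pi) := ⟨Real.two_pi_pos⟩
  have hval (θ : ℝ) :
      L1Algebra.fourierSeries (2 * Real.pi) (.ofSummable c hc) (θ : AddCircle _) = a θ := by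
    rw [ha, ← (L1Algebra.hasSum_fourierSeries_apply _ _ _).tsum_eq]
    refine tsum_congr fun k => ?_
    rw [fourier_two_pi_coe_apply, L1Algebra.ofSummable_apply]
  obtain ⟨G, p, h0, hp, hfac, hG⟩ := L1Algebra.exists_even_factorization (T := 2 * Real.pi)
    (a := .ofSummable c hc) (fun k => (heven k).symm)
    fun x => QuotientAddGroup.induction_on x fun θ => (hval θ).trans_ne (hnz θ)
  simp only [← (L1Algebra.hasSum_evalPow _ p).tsum_eq, smul_eq_mul] at hp hfac
  refine ⟨G, p, p.hasSum_norm.summable, h0, hp, fun θ => ?_, fun ℓ hℓ _ hexp => ?_⟩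
  · simpa only [hval, fourier_two_pi_coe_apply, Int.cast_neg, Int.cast_one, mul_neg, neg_mul,
      mul_one] using! hfac θ
  · rw [hG ℓ hℓ fun θ => (hval θ).trans (hexp θ), interval_average_eq, sub_zero, one_div,
      Complex.real_smul]

end
end
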